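/- arXiv:1909.10455 — 6 statements merged into one kernel-verified Lean document; each statement's English description precedes it below -/
import Mathlib

section
/- Let d ≥ 1 and let Θ, V ⊆ ℝ^d be nonempty, compact, convex, quadratically convex sets. Then inf over λ ∈ (0,∞)^d of sup over θ ∈ Θ, v ∈ V of Σ_{j=1}^d (λ_j θ_j² + v_j²/λ_j) equals sup over θ ∈ Θ, v ∈ V of inf over λ ∈ (0,∞)^d of Σ_{j=1}^d (λ_j θ_j² + v_j²/λ_j). -/
/-!
After the substitution `a = θ²`, `b = v²`, the objective `∑ (λ_j a_j + b_j / λ_j)` is affine in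
`(a, b)` and convex in `λ` on the open positive orthant. Quadratic convexity says exactly that
`(a, b)` ranges over a convex set, which is also compact as a continuous image of `Θ × V`. So the
Sion–von Neumann minimax theorem (`Sion.minimax`) applies; it needs compactness on one side only,
so the non-compactness of the orthant is harmless. Mathlib's version minimizes over the compact
side, hence it is applied to the negated objective, and the remaining work is to check that all
infima and suprema involved are over nonempty bounded sets.
-/

open Finset

/-- `S² := {(s₁²,…,s_d²) : s ∈ S}` is convex. -/
def QuadConvex {d : ℕ} (S : Set (Fin d → ℝ)) : Prop :=
  Convex ℝ ((fun (θ : Fin d → ℝ) (j : Fin d) => (θ j) ^ 2) '' S)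

lemma convex_posOrthant (d : ℕ) : Convex ℝ {lam : Fin d → ℝ | ∀ j, 0 < lam j} := by
  intro x hx y hy s t hs ht hst j
  exact convex_Ioi (0 : ℝ) (hx j) (hy j) hs ht hst

/-- The objective in the squared variables `x = (θ², v²)`. -/
noncomputable def sqObjective {d : ℕ} (x : (Fin d → ℝ) × (Fin d → ℝ)) (lam : Fin d → ℝ) : ℝ :=
  ∑ j, (lam j * x.1 j + x.2 j / lam j)

/-- The coordinatewise square map. -/
noncomputable def coordSq {d : ℕ} (θ : Fin d → ℝ) (j : Fin d) : ℝ := (θ j) ^ 2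

lemma continuous_coordSq {d : ℕ} : Continuous (coordSq (d := d)) := by
  unfold coordSq
  fun_prop

lemma convexOn_sqObjective {d : ℕ} (x : (Fin d → ℝ) × (Fin d → ℝ)) (hx : ∀ j, 0 ≤ x.2 j) :
    ConvexOn ℝ {lam : Fin d → ℝ | ∀ j, 0 < lam j} (sqObjective x) := by
  refine ⟨convex_posOrthant d, ?_⟩
  intro p hp q hq s t hs ht hst
  simp only [sqObjective, smul_eq_mul, Finset.mul_sum, ← Finset.sum_add_distrib]
  refine Finset.sum_le_sum fun j _ => ?_
  have hinv := (convexOn_zpow (𝕜 := ℝ) (-1)).2 (Set.mem_Ioi.2 (hp j)) (Set.mem_Ioi.2 (hq j))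
    hs ht hst
  simp only [smul_eq_mul, zpow_neg_one] at hinv
  have h := mul_le_mul_of_nonneg_left hinv (hx j)
  simp only [Pi.add_apply, Pi.smul_apply, smul_eq_mul, div_eq_mul_inv]
  linarith

lemma continuousOn_sqObjective {d : ℕ} (x : (Fin d → ℝ) × (Fin d → ℝ)) :
    ContinuousOn (sqObjective x) {lam : Fin d → ℝ | ∀ j, 0 < lam j} := by
  unfold sqObjective
  refine continuousOn_finsetSum _ fun j _ => ContinuousOn.add (by fun_prop) ?_
  exact ContinuousOn.div (by fun_prop) (by fun_prop) fun lam hlam => (hlam j).ne'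

lemma continuous_sqObjective_left {d : ℕ} (lam : Fin d → ℝ) :
    Continuous fun x : (Fin d → ℝ) × (Fin d → ℝ) => sqObjective x lam := by
  unfold sqObjective
  fun_prop

lemma sqObjective_combo {d : ℕ} (lam : Fin d → ℝ) (x y : (Fin d → ℝ) × (Fin d → ℝ)) (s t : ℝ) :
    sqObjective (s • x + t • y) lam = s * sqObjective x lam + t * sqObjective y lam := by
  simp only [sqObjective, Finset.mul_sum, ← Finset.sum_add_distrib]
  refine Finset.sum_congr rfl fun j _ => ?_
  simp only [Prod.fst_add, Prod.snd_add, Prod.smul_fst, Prod.smul_snd, Pi.add_apply,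
    Pi.smul_apply, smul_eq_mul]
  ring

theorem statement0 (d : ℕ) (hd : 1 ≤ d)
    (Θ V : Set (Fin d → ℝ))
    (hΘne : Θ.Nonempty) (hΘc : IsCompact Θ) (hΘconv : Convex ℝ Θ)
    (hΘqc : QuadConvex Θ)
    (hVne : V.Nonempty) (hVc : IsCompact V) (hVconv : Convex ℝ V)
    (hVqc : QuadConvex V) :
    sInf {r : ℝ | ∃ lam : Fin d → ℝ, (∀ j, 0 < lam j) ∧
        r = sSup {s : ℝ | ∃ θ ∈ Θ, ∃ v ∈ V,
          s = ∑ j, (lam j * (θ j) ^ 2 + (v j) ^ 2 / lam j)}} =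
    sSup {s : ℝ | ∃ θ ∈ Θ, ∃ v ∈ V,
        s = sInf {r : ℝ | ∃ lam : Fin d → ℝ, (∀ j, 0 < lam j) ∧
          r = ∑ j, (lam j * (θ j) ^ 2 + (v j) ^ 2 / lam j)}} := by
  set L : Set (Fin d → ℝ) := {lam | ∀ j, 0 < lam j} with hL
  set X : Set ((Fin d → ℝ) × (Fin d → ℝ)) := (coordSq '' Θ) ×ˢ (coordSq '' V) with hX
  have hXne : X.Nonempty := (hΘne.image _).prod (hVne.image _)
  have hXc : IsCompact X :=
    (hΘc.image continuous_coordSq).prod (hVc.image continuous_coordSq)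
  have hXconv : Convex ℝ X := Convex.prod hΘqc hVqc
  have hX1 : ∀ x ∈ X, ∀ j, 0 ≤ x.1 j := by
    rintro x ⟨⟨θ, _, hθ⟩, _⟩ j
    rw [← hθ]
    exact sq_nonneg _
  have hX2 : ∀ x ∈ X, ∀ j, 0 ≤ x.2 j := by
    rintro x ⟨_, ⟨v, _, hv⟩⟩ j
    rw [← hv]
    exact sq_nonneg _
  have h1L : (fun _ => 1 : Fin d → ℝ) ∈ L := fun _ => one_pos
  have hnonneg : ∀ x ∈ X, ∀ lam ∈ L, 0 ≤ sqObjective x lam := fun x hx lam hlam =>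
    Finset.sum_nonneg fun j _ => add_nonneg (mul_nonneg (hlam j).le (hX1 x hx j))
      (div_nonneg (hX2 x hx j) (hlam j).le)
  have hbdd : ∀ lam, BddAbove ((fun x => sqObjective x lam) '' X) := fun lam =>
    hXc.bddAbove_image (continuous_sqObjective_left lam).continuousOn
  have hbddInf : ∀ x ∈ X, BddBelow (sqObjective x '' L) := fun x hx =>
    ⟨0, by rintro _ ⟨lam, hlam, rfl⟩; exact hnonneg x hx lam hlam⟩
  have hinf : ∀ x ∈ X, IsGLB (sqObjective x '' L) (sInf (sqObjective x '' L)) := fun x hx =>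
    isGLB_csInf ⟨_, _, h1L, rfl⟩ (hbddInf x hx)
  have hsup : ∀ lam ∈ L, IsLUB ((fun x => sqObjective x lam) '' X)
      (sSup ((fun x => sqObjective x lam) '' X)) := fun lam _ =>
    isLUB_csSup (hXne.image _) (hbdd lam)
  -- Bounded above since the inner infimum is at most the objective at `λ = (1, …, 1)`.
  have hsupinf : IsLUB ((fun x => sInf (sqObjective x '' L)) '' X)
      (sSup ((fun x => sInf (sqObjective x '' L)) '' X)) := by
    refine isLUB_csSup (hXne.image _) ?_
    obtain ⟨C, hC⟩ := hbdd (fun _ => 1)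
    refine ⟨C, ?_⟩
    rintro _ ⟨x, hx, rfl⟩
    exact ((hinf x hx).1 ⟨_, h1L, rfl⟩).trans (hC ⟨x, hx, rfl⟩)
  have hinfsup : IsGLB ((fun lam => sSup ((fun x => sqObjective x lam) '' X)) '' L)
      (sInf ((fun lam => sSup ((fun x => sqObjective x lam) '' X)) '' L)) := by
    refine isGLB_csInf ⟨_, _, h1L, rfl⟩ ⟨0, ?_⟩
    rintro _ ⟨lam, hlam, rfl⟩
    obtain ⟨x, hx⟩ := hXne
    exact (hnonneg x hx lam hlam).trans ((hsup lam hlam).1 ⟨x, hx, rfl⟩)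
  have negGLB : ∀ {α : Type} {f : α → ℝ} {S : Set α} {c : ℝ}, IsGLB (f '' S) c →
      IsLUB {y | ∃ x ∈ S, -f x = y} (-c) := by
    intro α f S c h
    refine ⟨?_, fun u hu => ?_⟩
    · rintro _ ⟨x, hx, rfl⟩
      exact neg_le_neg (h.1 ⟨x, hx, rfl⟩)
    · refine neg_le.1 (h.2 ?_)
      rintro _ ⟨x, hx, rfl⟩
      exact neg_le.1 (hu ⟨x, hx, rfl⟩)
  have negLUB : ∀ {α : Type} {f : α → ℝ} {S : Set α} {c : ℝ}, IsLUB (f '' S) c →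
      IsGLB {y | ∃ x ∈ S, -f x = y} (-c) := by
    intro α f S c h
    refine ⟨?_, fun u hu => ?_⟩
    · rintro _ ⟨x, hx, rfl⟩
      exact neg_le_neg (h.1 ⟨x, hx, rfl⟩)
    · refine le_neg.1 (h.2 ?_)
      rintro _ ⟨x, hx, rfl⟩
      exact le_neg.1 (hu ⟨x, hx, rfl⟩)
  have key := Sion.minimax (X := X) (Y := L) (f := fun x lam => -sqObjective x lam)
    hXne hXc
    (fun lam _ => ((continuous_sqObjective_left lam).neg).continuousOn.lowerSemicontinuousOn)
    (fun lam _ => ConvexOn.quasiconvexOn ⟨hXconv, fun x _ y _ s t _ _ _ => by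
      simp only [sqObjective_combo, smul_eq_mul]
      linarith⟩)
    (convex_posOrthant d)
    (fun x _ => (continuousOn_sqObjective x).neg.upperSemicontinuousOn)
    (fun x hx => (convexOn_sqObjective x (hX2 x hx)).neg.quasiconcaveOn)
    hXconv
    _ (fun x hx => negGLB (hinf x hx)) _ (negLUB hsupinf)
    _ (fun lam hlam => negLUB (hsup lam hlam)) _ (negGLB hinfsup)
  -- The sets in the statement are images of `X` and `L` under the squared-variable objective.
  have e1 : ∀ g : (Fin d → ℝ) × (Fin d → ℝ) → ℝ,
      {s : ℝ | ∃ θ ∈ Θ, ∃ v ∈ V, s = g (coordSq θ, coordSq v)} = g '' X := by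
    intro g
    ext s
    constructor
    · rintro ⟨θ, hθ, v, hv, rfl⟩
      exact ⟨_, ⟨⟨θ, hθ, rfl⟩, ⟨v, hv, rfl⟩⟩, rfl⟩
    · rintro ⟨⟨_, _⟩, ⟨⟨θ, hθ, rfl⟩, ⟨v, hv, rfl⟩⟩, rfl⟩
      exact ⟨θ, hθ, v, hv, rfl⟩
  have e2 : ∀ g : (Fin d → ℝ) → ℝ,
      {r : ℝ | ∃ lam : Fin d → ℝ, (∀ j, 0 < lam j) ∧ r = g lam} = g '' L := by
    intro g
    ext r
    exact exists_congr fun lam => and_congr_right fun _ => eq_comm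
  have lhs : ∀ lam : Fin d → ℝ, {s : ℝ | ∃ θ ∈ Θ, ∃ v ∈ V,
      s = ∑ j, (lam j * (θ j) ^ 2 + (v j) ^ 2 / lam j)} = (fun x => sqObjective x lam) '' X :=
    fun lam => e1 fun x => sqObjective x lam
  have rhs : ∀ θ v : Fin d → ℝ, {r : ℝ | ∃ lam : Fin d → ℝ, (∀ j, 0 < lam j) ∧
      r = ∑ j, (lam j * (θ j) ^ 2 + (v j) ^ 2 / lam j)} =
        sqObjective (coordSq θ, coordSq v) '' L :=
    fun θ v => e2 (sqObjective (coordSq θ, coordSq v))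
  simp only [lhs, rhs]
  rw [e2, e1 fun x => sInf (sqObjective x '' L)]
  exact (neg_injective key).symm
end

section
/- Let d ≥ 1 and let Θ, V ⊆ ℝ^d be nonempty, compact, convex, quadratically convex sets. Then inf over λ ∈ (0,∞)^d of sup over θ ∈ Θ, v ∈ V of Σ_{j=1}^d (λ_j θ_j² + v_j²/λ_j) equals 2 · sup over θ ∈ Θ, v ∈ V of Σ_{j=1}^d |θ_j v_j|. -/
/-!
Write `A = Θ²` and `B = V²`, which are compact, convex and contained in the nonnegative orthant;
the claim becomes `inf_λ max_{a,b} ∑ (λ a + b / λ) = 2 max_{a,b} ∑ √(a b)`.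

The inequality `≥` is AM-GM. For `≤`, no minimax theorem is needed: for `ε > 0` the smooth function
`∑ √((a + ε) (b + ε))` attains its maximum over `A × B` at some `(p, q)`. Put
`λ = √((q + ε) / (p + ε))`. The gradient there is `(λ / 2, 1 / (2 λ))`, so the first-order condition
on the convex set `A × B` says that `∑ (λ a + b / λ)` is also maximal at `(p, q)`, where it is
at most `∑ (λ (p + ε) + (q + ε) / λ) = 2 ∑ √((p + ε) (q + ε))` (`exists_weights`). Letting
`ε → 0` finishes the proof, since the regularized square roots converge uniformly on bounded sets.
-/

open Finset

lemma two_abs_le_weighted {l x y : ℝ} (hl : 0 < l) :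
    2 * |x * y| ≤ l * x ^ 2 + y ^ 2 / l := by
  have h : l * x ^ 2 + y ^ 2 / l - 2 * |x * y| = (l * |x| - |y|) ^ 2 / l := by
    rw [abs_mul, ← sq_abs x, ← sq_abs y]
    field_simp
    ring
  have : 0 ≤ (l * |x| - |y|) ^ 2 / l := by positivity
  linarith

/-- The derivative at `0` of a geometric mean along a line, in terms of the weight `√(y / x)`. -/
lemma hasDerivAt_geom {x y α β : ℝ} (hx : 0 < x) (hy : 0 < y) :
    HasDerivAt (fun t : ℝ => √((x + t * α) * (y + t * β)))
      ((√(y / x) * α + β / √(y / x)) / 2) 0 := by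
  have h1 : HasDerivAt (fun t : ℝ => x + t * α) α 0 := by
    simpa using ((hasDerivAt_id (0 : ℝ)).mul_const α).const_add x
  have h2 : HasDerivAt (fun t : ℝ => y + t * β) β 0 := by
    simpa using ((hasDerivAt_id (0 : ℝ)).mul_const β).const_add y
  have h3 := (h1.fun_mul h2).sqrt (by simp [hx.ne', hy.ne'])
  convert h3 using 1
  have hx' := Real.sqrt_pos.2 hx
  have hy' := Real.sqrt_pos.2 hy
  simp only [zero_mul, add_zero]
  rw [Real.sqrt_div hy.le, Real.sqrt_mul hx.le]
  have hxy : α * y + x * β = α * √y ^ 2 + √x ^ 2 * β := by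
    rw [Real.sq_sqrt hx.le, Real.sq_sqrt hy.le]
  rw [hxy]
  field_simp

/-- The weight `√(y / x)` turns AM-GM into an equality. -/
lemma weight_eq {x y : ℝ} (hx : 0 < x) (hy : 0 < y) :
    √(y / x) * x + y / √(y / x) = 2 * √(x * y) := by
  have hx' := Real.sqrt_pos.2 hx
  have hy' := Real.sqrt_pos.2 hy
  rw [Real.sqrt_div hy.le, Real.sqrt_mul hx.le]
  nth_rewrite 2 [← Real.sq_sqrt hx.le]
  nth_rewrite 2 [← Real.sq_sqrt hy.le]
  field_simp
  ring

/-- A right-hand maximum at `0` forces a nonpositive derivative. -/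
lemma deriv_nonpos_of_right_max {g : ℝ → ℝ} {g' : ℝ} (hg : HasDerivAt g g' 0)
    (hmax : ∀ t, 0 < t → t ≤ 1 → g t ≤ g 0) : g' ≤ 0 := by
  have h1 := (hasDerivAt_iff_tendsto_slope.1 hg).mono_left
    (nhdsWithin_mono (0 : ℝ) (fun t (ht : t ∈ Set.Ioi (0 : ℝ)) => ne_of_gt ht))
  refine le_of_tendsto h1 ?_
  filter_upwards [Ioc_mem_nhdsGT (zero_lt_one (α := ℝ))] with t ht
  rw [slope_def_field, sub_zero]
  exact div_nonpos_of_nonpos_of_nonneg (sub_nonpos.2 (hmax t ht.1 ht.2)) ht.1.le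

/-- The upper bound for the regularized problem: weights obtained from the first-order optimality
condition at a maximizer of `∑ √((a + ε) (b + ε))`. -/
lemma exists_weights {d : ℕ} {A B : Set (Fin d → ℝ)} (hA : IsCompact A) (hB : IsCompact B)
    (hAc : Convex ℝ A) (hBc : Convex ℝ B) (hAn : A.Nonempty) (hBn : B.Nonempty)
    (hA0 : ∀ a ∈ A, ∀ j, 0 ≤ a j) (hB0 : ∀ b ∈ B, ∀ j, 0 ≤ b j) {ε : ℝ} (hε : 0 < ε) :
    ∃ lam : Fin d → ℝ, (∀ j, 0 < lam j) ∧ ∃ p ∈ A, ∃ q ∈ B, ∀ a ∈ A, ∀ b ∈ B,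
      ∑ j, (lam j * a j + b j / lam j) ≤ 2 * ∑ j, √((p j + ε) * (q j + ε)) := by
  obtain ⟨⟨p, q⟩, ⟨hp, hq⟩, hmax⟩ := (hA.prod hB).exists_isMaxOn (hAn.prod hBn)
    (f := fun z : (Fin d → ℝ) × (Fin d → ℝ) => ∑ j, √((z.1 j + ε) * (z.2 j + ε)))
    (Continuous.continuousOn (by fun_prop))
  have hp0 : ∀ j, 0 < p j + ε := fun j => add_pos_of_nonneg_of_pos (hA0 p hp j) hε
  have hq0 : ∀ j, 0 < q j + ε := fun j => add_pos_of_nonneg_of_pos (hB0 q hq j) hε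
  have hl : ∀ j, 0 < √((q j + ε) / (p j + ε)) := fun j =>
    Real.sqrt_pos.2 (div_pos (hq0 j) (hp0 j))
  refine ⟨fun j => √((q j + ε) / (p j + ε)), hl, p, hp, q, hq, fun a ha b hb => ?_⟩
  have hder := HasDerivAt.fun_sum (u := Finset.univ) fun j _ =>
    hasDerivAt_geom (α := a j - p j) (β := b j - q j) (hp0 j) (hq0 j)
  have hle := deriv_nonpos_of_right_max hder (fun t ht0 ht1 => by
    have hat := hAc hp ha (sub_nonneg.2 ht1) ht0.le (by ring)
    have hbt := hBc hq hb (sub_nonneg.2 ht1) ht0.le (by ring)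
    have := hmax (Set.mk_mem_prod hat hbt)
    simp only [Set.mem_ofPred_eq, Pi.add_apply, Pi.smul_apply, smul_eq_mul] at this
    simp only [zero_mul, add_zero]
    refine le_trans (le_of_eq (Finset.sum_congr rfl fun j _ => ?_)) this
    congr 1
    ring)
  rw [← Finset.sum_div] at hle
  have hle' : ∑ j, (√((q j + ε) / (p j + ε)) * (a j - p j)
      + (b j - q j) / √((q j + ε) / (p j + ε))) ≤ 0 := by linarith
  rw [Finset.mul_sum]
  refine le_trans ?_ (le_of_eq (Finset.sum_congr rfl fun j _ => weight_eq (hp0 j) (hq0 j)))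
  rw [← sub_nonpos, ← Finset.sum_sub_distrib]
  refine le_trans (Finset.sum_le_sum fun j _ => ?_) hle'
  have h1 : 0 ≤ √((q j + ε) / (p j + ε)) * ε := mul_nonneg (hl j).le hε.le
  have h2 : 0 ≤ ε / √((q j + ε) / (p j + ε)) := div_nonneg hε.le (hl j).le
  rw [sub_div, add_div (q j) ε (√((q j + ε) / (p j + ε)))]
  beta_reduce
  linarith

lemma sqrt_reg_le {x y M ε : ℝ} (hx : x ^ 2 ≤ M) (hy : y ^ 2 ≤ M) (hε : 0 < ε) :
    √((x ^ 2 + ε) * (y ^ 2 + ε)) ≤ |x * y| + √(ε * (2 * M + ε)) := by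
  have hM : 0 ≤ M := (sq_nonneg x).trans hx
  have h0 : 0 ≤ ε * (2 * M + ε) := by positivity
  refine Real.sqrt_le_iff.2 ⟨by positivity, ?_⟩
  have h1 := Real.sq_sqrt h0
  have h2 := sq_abs (x * y)
  have h3 : 0 ≤ |x * y| * √(ε * (2 * M + ε)) := by positivity
  nlinarith

theorem statement1 (d : ℕ) (hd : 1 ≤ d)
    (Θ V : Set (Fin d → ℝ))
    (hΘne : Θ.Nonempty) (hΘc : IsCompact Θ) (hΘconv : Convex ℝ Θ)
    (hΘqc : QuadConvex Θ)
    (hVne : V.Nonempty) (hVc : IsCompact V) (hVconv : Convex ℝ V)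
    (hVqc : QuadConvex V) :
    sInf {r : ℝ | ∃ lam : Fin d → ℝ, (∀ j, 0 < lam j) ∧
        r = sSup {s : ℝ | ∃ θ ∈ Θ, ∃ v ∈ V,
          s = ∑ j, (lam j * (θ j) ^ 2 + (v j) ^ 2 / lam j)}} =
    2 * sSup {s : ℝ | ∃ θ ∈ Θ, ∃ v ∈ V, s = ∑ j, |θ j * v j|} := by
  -- A continuous function is bounded above on the compact set `Θ × V`.
  have hbdd : ∀ F : (Fin d → ℝ) × (Fin d → ℝ) → ℝ, Continuous F →
      BddAbove {s : ℝ | ∃ θ ∈ Θ, ∃ v ∈ V, s = F (θ, v)} := by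
    intro F hF
    obtain ⟨C, hC⟩ := (hΘc.prod hVc).bddAbove_image hF.continuousOn
    refine ⟨C, ?_⟩
    rintro _ ⟨θ, hθ, v, hv, rfl⟩
    exact hC ⟨(θ, v), ⟨hθ, hv⟩, rfl⟩
  have hbS := hbdd (fun z => ∑ j, |z.1 j * z.2 j|) (by fun_prop)
  have hbL : ∀ lam : Fin d → ℝ, BddAbove {s : ℝ | ∃ θ ∈ Θ, ∃ v ∈ V,
          s = ∑ j, (lam j * (θ j) ^ 2 + (v j) ^ 2 / lam j)} := fun lam =>
    hbdd (fun z => ∑ j, (lam j * (z.1 j) ^ 2 + (z.2 j) ^ 2 / lam j)) (by fun_prop)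
  obtain ⟨θ₀, hθ₀⟩ := hΘne
  obtain ⟨v₀, hv₀⟩ := hVne
  set S := sSup {s : ℝ | ∃ θ ∈ Θ, ∃ v ∈ V, s = ∑ j, |θ j * v j|} with hS
  have hlow : ∀ r ∈ {r : ℝ | ∃ lam : Fin d → ℝ, (∀ j, 0 < lam j) ∧
        r = sSup {s : ℝ | ∃ θ ∈ Θ, ∃ v ∈ V,
          s = ∑ j, (lam j * (θ j) ^ 2 + (v j) ^ 2 / lam j)}}, 2 * S ≤ r := by
    rintro r ⟨lam, hlam, rfl⟩
    rw [← le_div_iff₀' two_pos]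
    refine csSup_le ⟨_, θ₀, hθ₀, v₀, hv₀, rfl⟩ ?_
    rintro _ ⟨θ, hθ, v, hv, rfl⟩
    rw [le_div_iff₀' two_pos, Finset.mul_sum]
    exact (Finset.sum_le_sum fun j _ => two_abs_le_weighted (hlam j)).trans
      (le_csSup (hbL lam) ⟨θ, hθ, v, hv, rfl⟩)
  refine le_antisymm ?_ (le_csInf ⟨_, fun _ => 1, fun _ => one_pos, rfl⟩ hlow)
  obtain ⟨M, hM⟩ := hbdd (fun z => ∑ j, ((z.1 j) ^ 2 + (z.2 j) ^ 2)) (by fun_prop)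
  have hM' : ∀ θ ∈ Θ, ∀ v ∈ V, ∀ j, θ j ^ 2 ≤ M ∧ v j ^ 2 ≤ M := by
    intro θ hθ v hv j
    have h1 : ∑ j, (θ j ^ 2 + v j ^ 2) ≤ M := hM ⟨θ, hθ, v, hv, rfl⟩
    have h2 := Finset.single_le_sum (f := fun j => θ j ^ 2 + v j ^ 2)
      (fun i _ => by positivity) (Finset.mem_univ j)
    have h3 := sq_nonneg (θ j)
    have h4 := sq_nonneg (v j)
    constructor <;> linarith
  have hcont : Continuous (fun θ : Fin d → ℝ => fun j => θ j ^ 2) := by fun_prop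
  have key : ∀ ε : ℝ, 0 < ε → sInf {r : ℝ | ∃ lam : Fin d → ℝ, (∀ j, 0 < lam j) ∧
        r = sSup {s : ℝ | ∃ θ ∈ Θ, ∃ v ∈ V,
          s = ∑ j, (lam j * (θ j) ^ 2 + (v j) ^ 2 / lam j)}}
        ≤ 2 * (S + d * √(ε * (2 * M + ε))) := by
    intro ε hε
    obtain ⟨lam, hlam, _, ⟨θ, hθ, rfl⟩, _, ⟨v, hv, rfl⟩, h⟩ :=
      exists_weights (hΘc.image hcont) (hVc.image hcont) hΘqc hVqc
        ⟨_, θ₀, hθ₀, rfl⟩ ⟨_, v₀, hv₀, rfl⟩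
        (by rintro _ ⟨x, -, rfl⟩ j; exact sq_nonneg _)
        (by rintro _ ⟨x, -, rfl⟩ j; exact sq_nonneg _) hε
    refine (csInf_le ⟨2 * S, hlow⟩ ⟨lam, hlam, rfl⟩).trans ?_
    refine csSup_le ⟨_, θ₀, hθ₀, v₀, hv₀, rfl⟩ ?_
    rintro _ ⟨x, hx, y, hy, rfl⟩
    refine (h _ ⟨x, hx, rfl⟩ _ ⟨y, hy, rfl⟩).trans ?_
    have h1 : ∑ j, |θ j * v j| ≤ S := le_csSup hbS ⟨θ, hθ, v, hv, rfl⟩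
    have h2 : ∑ j, √((θ j ^ 2 + ε) * (v j ^ 2 + ε))
        ≤ ∑ j, (|θ j * v j| + √(ε * (2 * M + ε))) :=
      Finset.sum_le_sum fun j _ => sqrt_reg_le (hM' θ hθ v hv j).1 (hM' θ hθ v hv j).2 hε
    rw [Finset.sum_add_distrib, Finset.sum_const, Finset.card_univ, Fintype.card_fin,
      nsmul_eq_mul] at h2
    simp only
    linarith
  have hlim : Filter.Tendsto (fun ε : ℝ => 2 * (S + d * √(ε * (2 * M + ε))))
      (nhdsWithin 0 (Set.Ioi 0)) (nhds (2 * S)) := by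
    have hc : Continuous (fun ε : ℝ => 2 * (S + d * √(ε * (2 * M + ε)))) := by fun_prop
    have := hc.tendsto 0
    simp only [zero_mul, Real.sqrt_zero, mul_zero, add_zero] at this
    exact this.mono_left nhdsWithin_le_nhds
  refine ge_of_tendsto hlim ?_
  filter_upwards [self_mem_nhdsWithin] with ε hε using key ε hε
end

section
/- Let d, n ≥ 1, let γ be an orthosymmetric, quadratically convex norm on ℝ^d, and let Θ ⊆ ℝ^d be nonempty, compact, convex, quadratically convex and orthosymmetric. Then there exists a hard instance (𝒳, F, 𝒫) for (Θ, γ, n) such that every estimator θ̂ : 𝒳ⁿ → ℝ^d satisfies sup_{P∈𝒫} E[f_P(θ̂(X₁,…,Xₙ)) − inf_{θ∈Θ} f_P(θ)] ≥ (1/(8√(log 3))) · (1/√n) · sup_{θ∈Θ} γ*(θ). -/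
/-!
The lower bound already follows from a two-point (Le Cam) argument in a single direction. Choose
`θ₀ ∈ Θ` and `g` with `γ g ≤ 1` such that `M = ⟨g, θ₀⟩` is at least `2/3` of
`sup_{θ ∈ Θ} γ*(θ)`, and let the observation be a sign `x = ±1` with loss `F(θ, x) = |⟨g, θ⟩ - x M|`.
Every subgradient of this loss is `c g` with `|c| ≤ 1`, hence has `γ`-norm at most `1`
(`subgradient_gamma_le`).

The two distributions give the signs probabilities `(1 ± δ)/2` with `δ = 1 / (2 √n)`. Since `±θ₀ ∈ Θ`,
both infima over `Θ` are at most `(1 - δ) M`, so both excess losses are nonnegative, and at every point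
they add up to at least `2 δ M`. The risks therefore add up to at least `2 δ M ∑ min(P₊ⁿ, P₋ⁿ)`
(`risk_add_risk_ge`), and by the Cauchy-Schwarz (Bhattacharyya) inequality
`∑ min(P₊ⁿ, P₋ⁿ) ≥ (1 - δ²)ⁿ / 2 ≥ 3/8` (`overlap_ge`, Bernoulli's inequality). The resulting bound
`3 M / (16 √n)` beats the required constant because `log 3 ≥ 1`.
-/

open Finset

/-- `S` is invariant under sign flips of coordinates. -/
def OrthoSymm {d : ℕ} (S : Set (Fin d → ℝ)) : Prop :=
  ∀ θ ∈ S, ∀ ε : Fin d → ℝ, (∀ j, ε j = 1 ∨ ε j = -1) →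
    (fun j => ε j * θ j) ∈ S

/-- `g` is a subgradient of `φ` at `θ`. -/
def IsSubgradientAt {d : ℕ} (φ : (Fin d → ℝ) → ℝ) (θ g : Fin d → ℝ) : Prop :=
  ∀ θ', φ θ + ∑ j, g j * (θ' j - θ j) ≤ φ θ'

/-- Expected loss `f_P(θ) = E_{X∼P}[F(θ,X)]` over the finite sample space `Fin m`. -/
noncomputable def expLoss {d m : ℕ} (P : Fin m → ℝ)
    (F : (Fin d → ℝ) → Fin m → ℝ) (θ : Fin d → ℝ) : ℝ :=
  ∑ x, P x * F θ x

/-- Risk of the estimator `est` under `P`: the expectation over an i.i.d. sample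
`X₁,…,Xₙ ∼ P` of `f_P(est X₁…Xₙ) - inf_{θ ∈ Θ} f_P(θ)`. -/
noncomputable def risk (d n m : ℕ) (P : Fin m → ℝ)
    (F : (Fin d → ℝ) → Fin m → ℝ) (Θ : Set (Fin d → ℝ))
    (est : (Fin n → Fin m) → (Fin d → ℝ)) : ℝ :=
  ∑ xs : Fin n → Fin m, (∏ i, P (xs i)) *
    (expLoss P F (est xs) - sInf (expLoss P F '' Θ))

/-- A hard instance for `(Θ, γ, n)`: a finite sample space `Fin m`, a loss `F`
convex in `θ` with all subgradients of `γ`-norm at most 1, and a finite family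
of probability distributions `P` on `Fin m`, such that every estimator has
worst-case risk at least `bound`. -/
def IsHardInstance (d n m K : ℕ) (Θ : Set (Fin d → ℝ))
    (γ : (Fin d → ℝ) → ℝ) (F : (Fin d → ℝ) → Fin m → ℝ)
    (P : Fin K → Fin m → ℝ) (bound : ℝ) : Prop :=
  (∀ x, ConvexOn ℝ Set.univ (fun θ => F θ x)) ∧
  (∀ x θ g, IsSubgradientAt (fun t => F t x) θ g → γ g ≤ 1) ∧
  (∀ v x, 0 ≤ P v x) ∧ (∀ v, ∑ x, P v x = 1) ∧
  ∀ est : (Fin n → Fin m) → (Fin d → ℝ), ∃ v,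
    bound ≤ risk d n m (P v) F Θ est

/-- Dual norm `γ*(z) = sup {⟨x, z⟩ : γ(x) ≤ 1}`. -/
noncomputable def dualNorm (d : ℕ) (γ : (Fin d → ℝ) → ℝ) (z : Fin d → ℝ) : ℝ :=
  sSup {t : ℝ | ∃ x : Fin d → ℝ, γ x ≤ 1 ∧ t = ∑ j, x j * z j}

/-- The two possible observations, encoded as `0 ↦ 1` and `1 ↦ -1`. -/
def obsSign (x : Fin 2) : ℝ := if x = 0 then 1 else -1

/-- The loss `|⟨g, θ⟩ - x M|` attached to the observed sign `x`. -/
def dirLoss {d : ℕ} (g : Fin d → ℝ) (M : ℝ) (θ : Fin d → ℝ) (x : Fin 2) : ℝ :=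
  |g ⬝ᵥ θ - obsSign x * M|

/-- The distribution on signs that favours the sign `v` with bias `δ`. -/
noncomputable def biased (δ : ℝ) (v x : Fin 2) : ℝ := if v = x then (1 + δ) / 2 else (1 - δ) / 2

lemma biased_nonneg {δ : ℝ} (h0 : 0 ≤ δ) (h1 : δ ≤ 1) (v x : Fin 2) : 0 ≤ biased δ v x := by
  unfold biased
  split_ifs <;> linarith

lemma biased_sum (δ : ℝ) (v : Fin 2) : ∑ x, biased δ v x = 1 := by
  fin_cases v <;> simp [biased, Fin.sum_univ_two] <;> ring

lemma biased_prod_sum (δ : ℝ) (n : ℕ) (v : Fin 2) :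
    ∑ xs : Fin n → Fin 2, ∏ i, biased δ v (xs i) = 1 := by
  rw [← Fintype.prod_sum (fun (_ : Fin n) x => biased δ v x)]
  simp only [biased_sum, Finset.prod_const_one]

lemma dirLoss_convexOn {d : ℕ} (g : Fin d → ℝ) (M : ℝ) (x : Fin 2) :
    ConvexOn ℝ Set.univ (fun θ => dirLoss g M θ x) := by
  refine ⟨convex_univ, fun a _ b _ s t hs ht hst => ?_⟩
  simp only [dirLoss, dotProduct_add, dotProduct_smul, smul_eq_mul]
  have e : s * g ⬝ᵥ a + t * g ⬝ᵥ b - obsSign x * M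
      = s * (g ⬝ᵥ a - obsSign x * M) + t * (g ⬝ᵥ b - obsSign x * M) := by
    linear_combination (obsSign x * M) * hst
  rw [e]
  refine (abs_add_le _ _).trans ?_
  rw [abs_mul, abs_mul, abs_of_nonneg hs, abs_of_nonneg ht]

/-- A subgradient `h` of `dirLoss` satisfies `⟨h, u⟩ ≤ |⟨g, u⟩|` for all `u`, which forces it to be a
multiple `c g` with `|c| ≤ 1`. -/
lemma subgradient_gamma_le {d : ℕ} {γ : (Fin d → ℝ) → ℝ}
    (hγ_smul : ∀ (c : ℝ) (x : Fin d → ℝ), γ (c • x) = |c| * γ x)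
    {g : Fin d → ℝ} (hg : γ g ≤ 1) (M : ℝ) (x : Fin 2) (θ h : Fin d → ℝ)
    (hsub : IsSubgradientAt (fun t => dirLoss g M t x) θ h) : γ h ≤ 1 := by
  have key : ∀ u : Fin d → ℝ, h ⬝ᵥ u ≤ |g ⬝ᵥ u| := by
    intro u
    have h1 := hsub (θ + u)
    have h2 : ∑ j, h j * ((θ + u) j - θ j) = h ⬝ᵥ u := by simp [dotProduct]
    rw [h2] at h1
    simp only [dirLoss, dotProduct_add] at h1
    have h3 := abs_add_le (g ⬝ᵥ θ - obsSign x * M) (g ⬝ᵥ u)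
    have e : g ⬝ᵥ θ + g ⬝ᵥ u - obsSign x * M = g ⬝ᵥ θ - obsSign x * M + g ⬝ᵥ u := by ring
    rw [e] at h1
    linarith
  obtain ⟨c, hc, rfl⟩ : ∃ c : ℝ, |c| ≤ 1 ∧ h = c • g := by
    by_cases hg0 : g = 0
    · refine ⟨0, by simp, ?_⟩
      have h1 := key h
      rw [hg0] at h1
      simp only [zero_dotProduct, abs_zero] at h1
      have h2 : h ⬝ᵥ h = 0 := le_antisymm h1 (Finset.sum_nonneg fun i _ => mul_self_nonneg _)
      simpa using dotProduct_self_eq_zero.1 h2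
    · have hN0 : g ⬝ᵥ g ≠ 0 := fun h0 => hg0 (dotProduct_self_eq_zero.1 h0)
      have hN : 0 < g ⬝ᵥ g :=
        lt_of_le_of_ne (Finset.sum_nonneg fun i _ => mul_self_nonneg _) hN0.symm
      refine ⟨(h ⬝ᵥ g) / (g ⬝ᵥ g), ?_, ?_⟩
      · have h1 := key g
        have h2 := key (-g)
        simp only [dotProduct_neg, abs_neg] at h2
        rw [abs_of_pos hN] at h1 h2
        rw [abs_div, abs_of_pos hN, div_le_one hN]
        exact abs_le.2 ⟨by linarith, h1⟩
      · set c := (h ⬝ᵥ g) / (g ⬝ᵥ g) with hc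
        -- the component of `h` orthogonal to `g` vanishes
        have hgu : g ⬝ᵥ (h - c • g) = 0 := by
          rw [dotProduct_sub, dotProduct_smul, smul_eq_mul, hc, dotProduct_comm g h]
          field_simp
          ring
        have h1 := key (h - c • g)
        rw [hgu, abs_zero] at h1
        have h2 : (h - c • g) ⬝ᵥ (h - c • g) = 0 := by
          refine le_antisymm ?_ (Finset.sum_nonneg fun i _ => mul_self_nonneg _)
          rw [sub_dotProduct, smul_dotProduct, hgu, smul_zero, sub_zero]
          exact h1
        exact sub_eq_zero.1 (dotProduct_self_eq_zero.1 h2)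
  rw [hγ_smul]
  nlinarith [abs_nonneg c]

/-- The overlap of the two `n`-fold products is bounded below through their Bhattacharyya
coefficient; here `P₊ⁿ P₋ⁿ` is the constant `((1 - δ²)/4)ⁿ`. -/
lemma overlap_ge {δ : ℝ} (h0 : 0 ≤ δ) (h1 : δ ≤ 1) (n : ℕ) :
    (1 - δ ^ 2) ^ n / 2 ≤
      ∑ xs : Fin n → Fin 2, min (∏ i, biased δ 0 (xs i)) (∏ i, biased δ 1 (xs i)) := by
  set p : Fin 2 → (Fin n → Fin 2) → ℝ := fun v xs => ∏ i, biased δ v (xs i) with hp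
  have hp0 : ∀ v xs, 0 ≤ p v xs := fun v xs => Finset.prod_nonneg fun i _ => biased_nonneg h0 h1 _ _
  have hc0 : 0 ≤ ((1 - δ ^ 2) / 4) ^ n := pow_nonneg (by nlinarith) n
  have hpq : ∀ xs, p 0 xs * p 1 xs = ((1 - δ ^ 2) / 4) ^ n := by
    intro xs
    rw [hp, ← Finset.prod_mul_distrib]
    have : ∀ y : Fin 2, biased δ 0 y * biased δ 1 y = (1 - δ ^ 2) / 4 := by
      intro y
      fin_cases y <;> simp [biased] <;> ring
    simp only [this, Finset.prod_const, Finset.card_univ, Fintype.card_fin]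
  have hcs := Finset.sum_sq_le_sum_mul_sum_of_sq_le_mul (Finset.univ : Finset (Fin n → Fin 2))
    (r := fun _ => √(((1 - δ ^ 2) / 4) ^ n))
    (f := fun xs => min (p 0 xs) (p 1 xs)) (g := fun xs => max (p 0 xs) (p 1 xs))
    (fun xs _ => le_min (hp0 _ _) (hp0 _ _)) (fun xs _ => (hp0 0 xs).trans (le_max_left _ _))
    (fun xs _ => by rw [Real.sq_sqrt hc0, min_mul_max, hpq])
  have hl : (∑ _xs : Fin n → Fin 2, √(((1 - δ ^ 2) / 4) ^ n)) ^ 2 = (1 - δ ^ 2) ^ n := by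
    rw [Finset.sum_const, nsmul_eq_mul, mul_pow, Real.sq_sqrt hc0]
    simp only [Finset.card_univ, Fintype.card_fun, Fintype.card_fin, Nat.cast_pow, Nat.cast_ofNat]
    rw [← pow_mul, mul_comm n 2, pow_mul, ← mul_pow]
    congr 1
    ring
  have hmax : ∑ xs, max (p 0 xs) (p 1 xs) ≤ 2 := by
    calc ∑ xs, max (p 0 xs) (p 1 xs) ≤ ∑ xs, (p 0 xs + p 1 xs) :=
          Finset.sum_le_sum fun xs _ => max_le (by linarith [hp0 1 xs]) (by linarith [hp0 0 xs])
      _ = 2 := by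
          rw [Finset.sum_add_distrib, hp, biased_prod_sum, biased_prod_sum]
          norm_num
  have hmin : 0 ≤ ∑ xs, min (p 0 xs) (p 1 xs) :=
    Finset.sum_nonneg fun xs _ => le_min (hp0 _ _) (hp0 _ _)
  rw [hl] at hcs
  nlinarith

lemma expLoss_zero {d : ℕ} (δ M : ℝ) (g θ : Fin d → ℝ) :
    expLoss (biased δ 0) (dirLoss g M) θ
      = (1 + δ) / 2 * |g ⬝ᵥ θ - M| + (1 - δ) / 2 * |g ⬝ᵥ θ + M| := by
  simp [expLoss, biased, dirLoss, obsSign, Fin.sum_univ_two]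

lemma expLoss_one {d : ℕ} (δ M : ℝ) (g θ : Fin d → ℝ) :
    expLoss (biased δ 1) (dirLoss g M) θ
      = (1 - δ) / 2 * |g ⬝ᵥ θ - M| + (1 + δ) / 2 * |g ⬝ᵥ θ + M| := by
  simp [expLoss, biased, dirLoss, obsSign, Fin.sum_univ_two]

lemma sInf_expLoss_le {d : ℕ} {δ M : ℝ} (h0 : 0 ≤ δ) (h1 : δ ≤ 1) {g θ : Fin d → ℝ}
    {Θ : Set (Fin d → ℝ)} (hθ : θ ∈ Θ) (v : Fin 2) :
    sInf (expLoss (biased δ v) (dirLoss g M) '' Θ) ≤ expLoss (biased δ v) (dirLoss g M) θ := by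
  refine csInf_le ⟨0, ?_⟩ (Set.mem_image_of_mem _ hθ)
  rintro _ ⟨t, -, rfl⟩
  exact Finset.sum_nonneg fun x _ => mul_nonneg (biased_nonneg h0 h1 _ _) (abs_nonneg _)

/-- Le Cam's bound: both excess losses are nonnegative and add up to at least `2 δ M`, so the two
risks add up to at least `2 δ M` times the overlap of the sampling distributions, which is at least
`(1 - δ²)ⁿ / 2`. -/
lemma risk_add_risk_ge {d n : ℕ} {δ M : ℝ} (h0 : 0 ≤ δ) (h1 : δ ≤ 1) (hM : 0 ≤ M)
    {g θ₀ : Fin d → ℝ} (hgM : g ⬝ᵥ θ₀ = M) {Θ : Set (Fin d → ℝ)} (hθ : θ₀ ∈ Θ) (hθ' : -θ₀ ∈ Θ)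
    (est : (Fin n → Fin 2) → (Fin d → ℝ)) :
    δ * M * (1 - δ ^ 2) ^ n ≤ risk d n 2 (biased δ 0) (dirLoss g M) Θ est
      + risk d n 2 (biased δ 1) (dirLoss g M) Θ est := by
  have i0 : sInf (expLoss (biased δ 0) (dirLoss g M) '' Θ) ≤ (1 - δ) * M := by
    refine (sInf_expLoss_le h0 h1 hθ 0).trans (le_of_eq ?_)
    rw [expLoss_zero, hgM, sub_self, abs_zero, abs_of_nonneg (by linarith)]
    ring
  have i1 : sInf (expLoss (biased δ 1) (dirLoss g M) '' Θ) ≤ (1 - δ) * M := by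
    refine (sInf_expLoss_le h0 h1 hθ' 1).trans (le_of_eq ?_)
    rw [expLoss_one, dotProduct_neg, hgM, neg_add_cancel, abs_zero, abs_of_nonpos (by linarith)]
    ring
  unfold risk
  rw [← Finset.sum_add_distrib]
  calc δ * M * (1 - δ ^ 2) ^ n = 2 * δ * M * ((1 - δ ^ 2) ^ n / 2) := by ring
    _ ≤ 2 * δ * M * ∑ xs : Fin n → Fin 2,
          min (∏ i, biased δ 0 (xs i)) (∏ i, biased δ 1 (xs i)) :=
        mul_le_mul_of_nonneg_left (overlap_ge h0 h1 n) (by positivity)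
    _ ≤ _ := by
        rw [Finset.mul_sum]
        refine Finset.sum_le_sum fun xs _ => ?_
        have hp : 0 ≤ ∏ i, biased δ 0 (xs i) := Finset.prod_nonneg fun i _ => biased_nonneg h0 h1 _ _
        have hq : 0 ≤ ∏ i, biased δ 1 (xs i) := Finset.prod_nonneg fun i _ => biased_nonneg h0 h1 _ _
        rw [expLoss_zero, expLoss_one]
        set t := g ⬝ᵥ est xs
        have ha1 := le_abs_self (t + M)
        have ha2 := neg_abs_le (t - M)
        -- minimality of `(1 - δ) M`: `|t - M| + |t + M| ≥ 2 M`, weighted by `(1 - δ) / 2`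
        have e0 : (1 - δ) * M ≤ (1 + δ) / 2 * |t - M| + (1 - δ) / 2 * |t + M| := by
          nlinarith [mul_nonneg h0 (abs_nonneg (t - M))]
        have e1 : (1 - δ) * M ≤ (1 - δ) / 2 * |t - M| + (1 + δ) / 2 * |t + M| := by
          nlinarith [mul_nonneg h0 (abs_nonneg (t + M))]
        set a := (1 + δ) / 2 * |t - M| + (1 - δ) / 2 * |t + M|
          - sInf (expLoss (biased δ 0) (dirLoss g M) '' Θ) with ha
        set b := (1 - δ) / 2 * |t - M| + (1 + δ) / 2 * |t + M|
          - sInf (expLoss (biased δ 1) (dirLoss g M) '' Θ) with hb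
        set p := ∏ i, biased δ 0 (xs i)
        set q := ∏ i, biased δ 1 (xs i)
        have ha0 : 0 ≤ a := by linarith
        have hb0 : 0 ≤ b := by linarith
        have hab : 2 * δ * M ≤ a + b := by
          rw [ha, hb]
          nlinarith
        calc 2 * δ * M * min p q ≤ (a + b) * min p q :=
              mul_le_mul_of_nonneg_right hab (le_min hp hq)
          _ = min p q * a + min p q * b := by ring
          _ ≤ p * a + q * b :=
              add_le_add (mul_le_mul_of_nonneg_right (min_le_left _ _) ha0)
                (mul_le_mul_of_nonneg_right (min_le_right _ _) hb0)

/-- A pair `(g, θ₀)` whose pairing reaches two thirds of the supremum. In the degenerate case of a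
nonpositive supremum (which covers the junk value of `sSup`) the choice `g = 0` works. -/
lemma exists_near_max {d : ℕ} {γ : (Fin d → ℝ) → ℝ} (hγ0 : γ 0 = 0) {Θ : Set (Fin d → ℝ)}
    (hΘne : Θ.Nonempty) :
    ∃ g θ₀ : Fin d → ℝ, γ g ≤ 1 ∧ θ₀ ∈ Θ ∧ 0 ≤ g ⬝ᵥ θ₀ ∧
      sSup (dualNorm d γ '' Θ) ≤ 3 / 2 * g ⬝ᵥ θ₀ := by
  rcases le_or_gt (sSup (dualNorm d γ '' Θ)) 0 with hs | hs
  · obtain ⟨θ, hθ⟩ := hΘne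
    exact ⟨0, θ, by simp [hγ0], hθ, by simp, by simpa using hs⟩
  · set s := sSup (dualNorm d γ '' Θ)
    have hlt : 2 / 3 * s < s := by linarith
    obtain ⟨_, ⟨θ, hθ, rfl⟩, h1⟩ := exists_lt_of_lt_csSup (hΘne.image _) hlt
    have hne : {t : ℝ | ∃ x : Fin d → ℝ, γ x ≤ 1 ∧ t = ∑ j, x j * θ j}.Nonempty :=
      ⟨0, 0, by simp [hγ0], by simp⟩
    obtain ⟨_, ⟨g, hg, rfl⟩, h2⟩ := exists_lt_of_lt_csSup hne h1
    have h3 : 2 / 3 * s < g ⬝ᵥ θ := h2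
    exact ⟨g, θ, hg, hθ, by linarith, by linarith⟩

theorem statement3 (d n : ℕ) (hd : 1 ≤ d) (hn : 1 ≤ n)
    (γ : (Fin d → ℝ) → ℝ)
    (hγ_tri : ∀ x y, γ (x + y) ≤ γ x + γ y)
    (hγ_smul : ∀ (c : ℝ) (x : Fin d → ℝ), γ (c • x) = |c| * γ x)
    (hγ_pos : ∀ x, γ x = 0 → x = 0)
    (hγ_os : ∀ (x ε : Fin d → ℝ), (∀ j, ε j = 1 ∨ ε j = -1) →
      γ (fun j => ε j * x j) = γ x)
    (hγ_qc : QuadConvex {x : Fin d → ℝ | γ x ≤ 1})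
    (Θ : Set (Fin d → ℝ)) (hΘne : Θ.Nonempty) (hΘc : IsCompact Θ)
    (hΘconv : Convex ℝ Θ) (hΘqc : QuadConvex Θ) (hΘos : OrthoSymm Θ) :
    ∃ (m K : ℕ) (F : (Fin d → ℝ) → Fin m → ℝ) (P : Fin K → Fin m → ℝ),
      0 < m ∧ 0 < K ∧
      IsHardInstance d n m K Θ γ F P
        ((1 / (8 * Real.sqrt (Real.log 3))) * (1 / Real.sqrt n) *
          sSup (dualNorm d γ '' Θ)) := by
  have hγ0 : γ 0 = 0 := by simpa using hγ_smul 0 0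
  obtain ⟨g, θ₀, hg, hθ, hM, hs⟩ := exists_near_max hγ0 hΘne
  have hθ' : -θ₀ ∈ Θ := by
    have h := hΘos θ₀ hθ (fun _ => -1) (fun _ => Or.inr rfl)
    have e : (fun j => (-1 : ℝ) * θ₀ j) = -θ₀ := by
      ext j
      simp
    rwa [e] at h
  have hn1 : (1 : ℝ) ≤ n := by exact_mod_cast hn
  have hr1 : 1 ≤ √(n : ℝ) := Real.one_le_sqrt.2 hn1
  have hr0 : 0 < √(n : ℝ) := by linarith
  set δ : ℝ := 1 / (2 * √(n : ℝ)) with hδ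
  have hδ0 : 0 ≤ δ := by positivity
  have hδ1 : δ ≤ 1 := by
    rw [hδ, div_le_one (by positivity)]
    linarith
  have hδsq : (n : ℝ) * δ ^ 2 = 1 / 4 := by
    rw [hδ, div_pow, mul_pow, Real.sq_sqrt (by linarith)]
    field_simp
    norm_num
  have hbern : 3 / 4 ≤ (1 - δ ^ 2) ^ n := by
    have h := one_add_mul_le_pow (a := -δ ^ 2) (by nlinarith) n
    calc (3 : ℝ) / 4 = 1 + n * -δ ^ 2 := by linarith
      _ ≤ (1 + -δ ^ 2) ^ n := h
      _ = (1 - δ ^ 2) ^ n := by rw [← sub_eq_add_neg]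
  have hlog : 1 ≤ √(Real.log 3) := by
    rw [Real.one_le_sqrt, Real.le_log_iff_exp_le (by norm_num)]
    linarith [Real.exp_one_lt_d9]
  have hbound : 1 / (8 * √(Real.log 3)) * (1 / √(n : ℝ)) * sSup (dualNorm d γ '' Θ)
      ≤ 3 / 8 * (δ * g ⬝ᵥ θ₀) := by
    calc 1 / (8 * √(Real.log 3)) * (1 / √(n : ℝ)) * sSup (dualNorm d γ '' Θ)
        ≤ 1 / (8 * √(Real.log 3)) * (1 / √(n : ℝ)) * (3 / 2 * g ⬝ᵥ θ₀) :=
          mul_le_mul_of_nonneg_left hs (by positivity)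
      _ ≤ 1 / 8 * (1 / √(n : ℝ)) * (3 / 2 * g ⬝ᵥ θ₀) := by
          have : 1 / (8 * √(Real.log 3)) ≤ 1 / 8 :=
            one_div_le_one_div_of_le (by norm_num) (by linarith)
          gcongr
      _ = 3 / 8 * (δ * g ⬝ᵥ θ₀) := by
          rw [hδ]
          field_simp
  refine ⟨2, 2, dirLoss g (g ⬝ᵥ θ₀), biased δ, two_pos, two_pos, dirLoss_convexOn g _,
    fun x θ h => subgradient_gamma_le hγ_smul hg _ x θ h, biased_nonneg hδ0 hδ1, biased_sum δ,
    fun est => ?_⟩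
  have hsum := risk_add_risk_ge hδ0 hδ1 hM rfl hθ hθ' est
  have hge : δ * g ⬝ᵥ θ₀ * (3 / 4) ≤ δ * g ⬝ᵥ θ₀ * (1 - δ ^ 2) ^ n :=
    mul_le_mul_of_nonneg_left hbern (by positivity)
  by_contra! hcon
  have c0 := hcon 0
  have c1 := hcon 1
  linarith
end

section
/- Let d, n ≥ 1, let γ be an orthosymmetric, quadratically convex norm on ℝ^d, and let Θ ⊆ ℝ^d be nonempty, compact, convex, quadratically convex and orthosymmetric. Then for every ε > 0 there exists λ ∈ (0,∞)^d such that for every sequence g₁,…,gₙ ∈ ℝ^d with γ(g_i) ≤ 1 for all i, and every θ ∈ Θ, the diagonally-scaled gradient method with scaling λ satisfies Σ_{i=1}^n ⟨g_i, θ_i − θ⟩ ≤ √n · sup_{θ'∈Θ} γ*(θ') + ε. -/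
/-!
Completing the square coordinatewise bounds the regret by
`½ Σ_j (λ_j θ_j² + Σ_i g_{ij}² / λ_j)` (`dsgRegret_le`), which is the average over `i` of
`½ Σ_j (λ_j τ_j + n u_j / λ_j)` at `τ = θ²`, `u = g_i²`. This is linear in `(τ, u)`, and by
quadratic convexity `(τ, u)` ranges over a compact convex set, the product of the squares of `Θ`
and of the unit ball of `γ`. A minimax argument (`exists_weights`) then finds weights for which
its supremum is at most `√n · sup Σ_j √(τ_j u_j) + ε`: maximise the concave function
`Σ_j √((τ_j + δ)(u_j + δ))` and take `λ` proportional to its gradient in `τ`; first-order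
optimality at the maximiser gives the required bound, and `δ → 0` costs only `ε`. Finally
`Σ_j √(τ_j u_j) = Σ_j |θ_j x_j|`, which by orthosymmetry of `γ` is at most `γ*(θ)`.
-/

open Finset

/-- Iterates of the diagonally-scaled gradient method with scaling `lam`:
`θ₁ = 0` and `θ_{i+1,j} = θ_{i,j} - g_{i,j} / lam j`. -/
noncomputable def dsgIter (d n : ℕ) (lam : Fin d → ℝ)
    (g : Fin n → Fin d → ℝ) (i : Fin n) : Fin d → ℝ :=
  fun j => -(∑ l ∈ Finset.univ.filter (fun l : Fin n => l.val < i.val), g l j) / lam j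

/-- Regret of the diagonally-scaled gradient method on linear losses
`θ ↦ ⟨gᵢ, θ⟩` against comparator `θ`. -/
noncomputable def dsgRegret (d n : ℕ) (lam : Fin d → ℝ)
    (g : Fin n → Fin d → ℝ) (θ : Fin d → ℝ) : ℝ :=
  ∑ i, ∑ j, g i j * (dsgIter d n lam g i j - θ j)

/-! ### Regret of the diagonally-scaled method -/

/-- `Σ_i h_i Σ_{l<i} h_l` is half of `(Σ h)² - Σ h²`. -/
lemma two_mul_sum_mul_prefix {n : ℕ} (h : Fin n → ℝ) :
    2 * ∑ i, h i * ∑ l ∈ Finset.univ.filter (fun l : Fin n => l.val < i.val), h l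
      = (∑ i, h i) ^ 2 - ∑ i, h i ^ 2 := by
  have hite : ∑ i, h i * ∑ l ∈ Finset.univ.filter (fun l : Fin n => l.val < i.val), h l
      = ∑ i, ∑ l, h i * (if l.val < i.val then h l else 0) := by
    simp only [Finset.sum_filter, Finset.mul_sum]
  have hsq : (∑ i, h i) ^ 2 = ∑ i, ∑ l, h i * h l := by
    rw [sq, Finset.sum_mul_sum]
  have hdiag : ∑ i, h i ^ 2 = ∑ i, ∑ l, (if l = i then h i * h l else 0) := by
    simp [sq]
  have hswap : ∑ i, ∑ l, h i * (if l.val < i.val then h l else 0)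
      = ∑ i, ∑ l, h i * (if i.val < l.val then h l else 0) := by
    rw [Finset.sum_comm]
    refine Finset.sum_congr rfl fun i _ => Finset.sum_congr rfl fun l _ => ?_
    split_ifs <;> ring
  have hsplit : ∑ i, ∑ l, h i * (if l.val < i.val then h l else 0)
      + ∑ i, ∑ l, h i * (if i.val < l.val then h l else 0)
      + ∑ i, ∑ l, (if l = i then h i * h l else 0) = ∑ i, ∑ l, h i * h l := by
    simp only [← Finset.sum_add_distrib]
    refine Finset.sum_congr rfl fun i _ => Finset.sum_congr rfl fun l _ => ?_
    rcases lt_trichotomy l.val i.val with hl | hl | hl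
    · have : l ≠ i := fun e => by simp [e] at hl
      simp [hl, this, hl.le.not_gt]
    · have : l = i := Fin.ext hl
      simp [this]
    · have : l ≠ i := fun e => by simp [e] at hl
      simp [hl, this, hl.le.not_gt]
  linarith

/-- One-dimensional regret bound, obtained by completing the square in `Σ h`. -/
lemma coord_regret_le {n : ℕ} (h : Fin n → ℝ) {c : ℝ} (hc : 0 < c) (t : ℝ) :
    ∑ i, h i * (-(∑ l ∈ Finset.univ.filter (fun l : Fin n => l.val < i.val), h l) / c - t)
      ≤ c * t ^ 2 / 2 + (∑ i, h i ^ 2) / (2 * c) := by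
  have e : ∑ i, h i * (-(∑ l ∈ Finset.univ.filter (fun l : Fin n => l.val < i.val), h l) / c - t)
      = -(∑ i, h i * ∑ l ∈ Finset.univ.filter (fun l : Fin n => l.val < i.val), h l) / c
        - (∑ i, h i) * t := by
    rw [neg_div, Finset.sum_div, Finset.sum_mul, ← Finset.sum_neg_distrib,
      ← Finset.sum_sub_distrib]
    exact Finset.sum_congr rfl fun i _ => by ring
  have k := two_mul_sum_mul_prefix h
  rw [e, show ∑ i, h i * ∑ l ∈ Finset.univ.filter (fun l : Fin n => l.val < i.val), h l
    = ((∑ i, h i) ^ 2 - ∑ i, h i ^ 2) / 2 by linarith]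
  set G := ∑ i, h i
  set Q := ∑ i, h i ^ 2
  have : c * t ^ 2 / 2 + Q / (2 * c) - (-((G ^ 2 - Q) / 2) / c - G * t)
      = (G + c * t) ^ 2 / (2 * c) := by
    field_simp
    ring
  have : 0 ≤ (G + c * t) ^ 2 / (2 * c) := by positivity
  linarith

lemma dsgRegret_le {d n : ℕ} {lam : Fin d → ℝ} (hlam : ∀ j, 0 < lam j)
    (g : Fin n → Fin d → ℝ) (θ : Fin d → ℝ) :
    dsgRegret d n lam g θ
      ≤ ∑ j, (lam j * θ j ^ 2 / 2 + (∑ i, g i j ^ 2) / (2 * lam j)) := by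
  unfold dsgRegret dsgIter
  rw [Finset.sum_comm]
  exact Finset.sum_le_sum fun j _ => coord_regret_le (fun i => g i j) (hlam j) (θ j)

/-! ### Choice of the weights by minimax -/

/-- First-order optimality: if `Σ_j √(a_j b_j)` does not increase along the segment from `(a, b)`
in direction `(p, q)`, its directional derivative there is nonpositive. -/
lemma first_order {d : ℕ} (a b p q : Fin d → ℝ) (ha : ∀ j, 0 < a j) (hb : ∀ j, 0 < b j)
    (hmax : ∀ t : ℝ, 0 < t → t ≤ 1 →
      ∑ j, √((a j + t * p j) * (b j + t * q j)) ≤ ∑ j, √(a j * b j)) :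
    ∑ j, (p j * b j + a j * q j) / (2 * √(a j * b j)) ≤ 0 := by
  set φ : ℝ → ℝ := fun t => ∑ j, √((a j + t * p j) * (b j + t * q j)) with hφ
  have hd : HasDerivAt φ (∑ j, (p j * b j + a j * q j) / (2 * √(a j * b j))) 0 := by
    refine HasDerivAt.fun_sum fun j _ => ?_
    have h1 : HasDerivAt (fun t : ℝ => a j + t * p j) (p j) 0 := by
      simpa using ((hasDerivAt_id (0 : ℝ)).mul_const (p j)).const_add (a j)
    have h2 : HasDerivAt (fun t : ℝ => b j + t * q j) (q j) 0 := by
      simpa using ((hasDerivAt_id (0 : ℝ)).mul_const (q j)).const_add (b j)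
    have h3 := (h1.fun_mul h2).sqrt (by simpa using (mul_pos (ha j) (hb j)).ne')
    simpa using h3
  refine le_of_tendsto hd.tendsto_slope_zero_right ?_
  filter_upwards [Ioc_mem_nhdsGT (zero_lt_one' ℝ)] with t ht
  have h0 : φ t ≤ φ 0 := by simpa [hφ] using hmax t ht.1 ht.2
  rw [zero_add, smul_eq_mul]
  exact mul_nonpos_of_nonneg_of_nonpos (inv_nonneg.2 ht.1.le) (by linarith)

/-- Shifting both factors by `δ` changes `√(ab)` by a uniformly small amount on `[0, M]²`. -/
lemma sqrt_shift_le {a b M δ : ℝ} (ha : 0 ≤ a) (hb : 0 ≤ b) (haM : a ≤ M) (hbM : b ≤ M)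
    (hδ : 0 ≤ δ) : √((a + δ) * (b + δ)) ≤ √(a * b) + √(2 * M * δ + δ ^ 2) := by
  have hM : 0 ≤ M := ha.trans haM
  have h1 := Real.sq_sqrt (mul_nonneg ha hb)
  have h2 := Real.sq_sqrt (show 0 ≤ 2 * M * δ + δ ^ 2 by positivity)
  refine Real.sqrt_le_iff.2 ⟨by positivity, ?_⟩
  nlinarith [mul_nonneg (Real.sqrt_nonneg (a * b)) (Real.sqrt_nonneg (2 * M * δ + δ ^ 2))]

/-- The minimax step. For compact convex sets `T`, `U` of nonnegative vectors on which
`Σ √(τ_j u_j)` is at most `V`, some positive weights make the linearisation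
`½ Σ (λ_j τ_j + n u_j / λ_j)` at most `√n V + ε` on all of `T × U`. The weights are read off the
gradient at a maximiser of the function `Σ √((τ_j + δ) (u_j + δ))`, smooth on `T × U`. -/
lemma exists_weights_s4 {d n : ℕ} (hn : 1 ≤ n) (T U : Set (Fin d → ℝ))
    (hTc : IsCompact T) (hUc : IsCompact U) (hTne : T.Nonempty) (hUne : U.Nonempty)
    (hTconv : Convex ℝ T) (hUconv : Convex ℝ U)
    {M : ℝ} (hT : ∀ τ ∈ T, ∀ j, 0 ≤ τ j ∧ τ j ≤ M) (hU : ∀ u ∈ U, ∀ j, 0 ≤ u j ∧ u j ≤ M)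
    {V : ℝ} (hV : ∀ τ ∈ T, ∀ u ∈ U, ∑ j, √(τ j * u j) ≤ V) {ε : ℝ} (hε : 0 < ε) :
    ∃ lam : Fin d → ℝ, (∀ j, 0 < lam j) ∧ ∀ τ ∈ T, ∀ u ∈ U,
      ∑ j, (lam j * τ j / 2 + n * u j / (2 * lam j)) ≤ √n * V + ε := by
  have hnpos : (0 : ℝ) < n := by exact_mod_cast hn
  have hs : 0 < √(n : ℝ) := Real.sqrt_pos.2 hnpos
  have hss : √(n : ℝ) * √(n : ℝ) = n := Real.mul_self_sqrt hnpos.le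
  obtain ⟨δ, hδ, hδε⟩ : ∃ δ : ℝ, 0 < δ ∧ √n * (d * √(2 * M * δ + δ ^ 2)) < ε := by
    have hc : Continuous fun δ : ℝ => √n * (d * √(2 * M * δ + δ ^ 2)) := by fun_prop
    have h0 : ∀ᶠ δ in nhdsWithin (0 : ℝ) (Set.Ioi 0), √n * (d * √(2 * M * δ + δ ^ 2)) < ε :=
      (hc.continuousAt.eventually_lt_const (by simpa using hε)).filter_mono nhdsWithin_le_nhds
    obtain ⟨δ, h1, h2⟩ := (h0.and self_mem_nhdsWithin).exists
    exact ⟨δ, h2, h1⟩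
  obtain ⟨⟨τ₀, u₀⟩, hmem, hmax⟩ := (hTc.prod hUc).exists_isMaxOn (hTne.prod hUne)
    (f := fun x : (Fin d → ℝ) × (Fin d → ℝ) => ∑ j, √((x.1 j + δ) * (x.2 j + δ)))
    (by fun_prop)
  obtain ⟨hτ₀, hu₀⟩ : τ₀ ∈ T ∧ u₀ ∈ U := hmem
  have ha : ∀ j, 0 < τ₀ j + δ := fun j => by linarith [(hT τ₀ hτ₀ j).1]
  have hb : ∀ j, 0 < u₀ j + δ := fun j => by linarith [(hU u₀ hu₀ j).1]
  have hr : ∀ j, 0 < √((τ₀ j + δ) * (u₀ j + δ)) := fun j =>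
    Real.sqrt_pos.2 (mul_pos (ha j) (hb j))
  refine ⟨fun j => √n * (u₀ j + δ) / √((τ₀ j + δ) * (u₀ j + δ)),
    fun j => div_pos (mul_pos hs (hb j)) (hr j), fun τ hτ u hu => ?_⟩
  have hfo := first_order (fun j => τ₀ j + δ) (fun j => u₀ j + δ) (fun j => τ j - τ₀ j)
    (fun j => u j - u₀ j) ha hb (by
      intro t ht0 ht1
      have h1 := hTconv hτ₀ hτ (sub_nonneg.2 ht1) ht0.le (by ring)
      have h2 := hUconv hu₀ hu (sub_nonneg.2 ht1) ht0.le (by ring)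
      have h3 := hmax (Set.mk_mem_prod h1 h2)
      simp only [Set.mem_ofPred_eq, Pi.add_apply, Pi.smul_apply, smul_eq_mul] at h3
      refine le_trans (le_of_eq ?_) h3
      exact Finset.sum_congr rfl fun j _ => by congr 1; ring)
  have hF : ∑ j, √((τ₀ j + δ) * (u₀ j + δ)) ≤ V + d * √(2 * M * δ + δ ^ 2) := by
    calc _ ≤ ∑ j, (√(τ₀ j * u₀ j) + √(2 * M * δ + δ ^ 2)) :=
          Finset.sum_le_sum fun j _ => sqrt_shift_le (hT τ₀ hτ₀ j).1 (hU u₀ hu₀ j).1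
            (hT τ₀ hτ₀ j).2 (hU u₀ hu₀ j).2 hδ.le
      _ ≤ _ := by
          rw [Finset.sum_add_distrib]
          simpa using hV τ₀ hτ₀ u₀ hu₀
  have hpt : ∀ j, (√n * (u₀ j + δ) / √((τ₀ j + δ) * (u₀ j + δ))) * τ j / 2
      + n * u j / (2 * (√n * (u₀ j + δ) / √((τ₀ j + δ) * (u₀ j + δ))))
      ≤ √n * ((((τ j - τ₀ j) * (u₀ j + δ) + (τ₀ j + δ) * (u j - u₀ j))
        / (2 * √((τ₀ j + δ) * (u₀ j + δ)))) + √((τ₀ j + δ) * (u₀ j + δ))) := by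
    intro j
    have hrr := Real.mul_self_sqrt (mul_pos (ha j) (hb j)).le
    have haj := ha j
    have hbj := hb j
    have hrj := hr j
    set a := τ₀ j + δ with hadef
    set b := u₀ j + δ with hbdef
    set r := √(a * b)
    have e1 : n * u j / (2 * (√n * b / r)) = √n * (a * u j / (2 * r)) := by
      have hss' : (n : ℝ) / √n = √n := by rw [div_eq_iff hs.ne', hss]
      calc n * u j / (2 * (√n * b / r)) = n / √n * (r * r * u j / (2 * b * r)) := by
            field_simp
        _ = √n * (a * u j / (2 * r)) := by
            rw [hss', hrr]
            field_simp
    have e2 : √n * (((τ j - τ₀ j) * b + a * (u j - u₀ j)) / (2 * r) + r)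
        - (√n * b / r * τ j / 2 + √n * (a * u j / (2 * r))) = √n * ((a + b) * δ / (2 * r)) := by
      have h1 : τ₀ j = a - δ := by rw [hadef]; ring
      have h2 : u₀ j = b - δ := by rw [hbdef]; ring
      rw [h1, h2]
      field_simp
      linear_combination 2 * hrr
    have : 0 ≤ √n * ((a + b) * δ / (2 * r)) := by positivity
    rw [e1]
    linarith
  calc _ ≤ _ := Finset.sum_le_sum fun j _ => hpt j
    _ ≤ √n * (V + d * √(2 * M * δ + δ ^ 2)) := by
      rw [← Finset.mul_sum, Finset.sum_add_distrib]
      exact mul_le_mul_of_nonneg_left (by linarith) hs.le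
    _ ≤ √n * V + ε := by linarith

/-! ### Orthosymmetric norms -/

lemma exists_sign {d : ℕ} (x z : Fin d → ℝ) :
    ∃ e : Fin d → ℝ, (∀ j, e j = 1 ∨ e j = -1) ∧ ∀ j, e j * x j * z j = |x j * z j| := by
  refine ⟨fun j => if 0 ≤ x j * z j then 1 else -1, fun j => ?_, fun j => ?_⟩
  · dsimp only; split_ifs <;> simp
  · dsimp only; split_ifs with h
    · rw [abs_of_nonneg h]; ring
    · rw [abs_of_neg (not_le.1 h)]; ring

section Norm
variable {d : ℕ} {γ : (Fin d → ℝ) → ℝ}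

lemma osNorm_nonneg (hγ_tri : ∀ x y, γ (x + y) ≤ γ x + γ y)
    (hγ_smul : ∀ (c : ℝ) (x : Fin d → ℝ), γ (c • x) = |c| * γ x) (x : Fin d → ℝ) : 0 ≤ γ x := by
  have h0 : γ 0 = 0 := by simpa using hγ_smul 0 0
  have h1 : γ (-x) = γ x := by simpa using hγ_smul (-1) x
  have := hγ_tri x (-x)
  rw [add_neg_cancel, h0, h1] at this
  linarith

lemma osNorm_continuous (hγ_tri : ∀ x y, γ (x + y) ≤ γ x + γ y)
    (hγ_smul : ∀ (c : ℝ) (x : Fin d → ℝ), γ (c • x) = |c| * γ x) : Continuous γ := by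
  have hconv : ConvexOn ℝ Set.univ γ := by
    refine ⟨convex_univ, fun x _ y _ a b ha hb _ => ?_⟩
    have := hγ_tri (a • x) (b • y)
    rw [hγ_smul, hγ_smul, abs_of_nonneg ha, abs_of_nonneg hb] at this
    simpa using this
  simpa [continuousOn_univ] using hconv.continuousOn isOpen_univ

/-- Averaging `x` with its reflection in all coordinates but `j` leaves `x_j e_j`, so an
orthosymmetric norm controls every coordinate. -/
lemma coord_le_osNorm (hγ_tri : ∀ x y, γ (x + y) ≤ γ x + γ y)
    (hγ_smul : ∀ (c : ℝ) (x : Fin d → ℝ), γ (c • x) = |c| * γ x)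
    (hγ_os : ∀ (x ε : Fin d → ℝ), (∀ j, ε j = 1 ∨ ε j = -1) →
      γ (fun j => ε j * x j) = γ x) (x : Fin d → ℝ) (j : Fin d) :
    |x j| * γ (Pi.single j 1) ≤ γ x := by
  have h := hγ_os x (fun k => if k = j then 1 else -1) (fun k => by split_ifs <;> simp)
  have h2 := hγ_tri x (fun k => (if k = j then 1 else -1) * x k)
  have h3 : x + (fun k => (if k = j then 1 else -1) * x k)
      = (2 * x j) • (Pi.single j 1 : Fin d → ℝ) := by
    ext k
    by_cases hk : k = j
    · subst hk; simp; ring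
    · simp [hk]
  rw [h3, hγ_smul, h, abs_mul, abs_two] at h2
  linarith

lemma exists_coord_bound (hγ_tri : ∀ x y, γ (x + y) ≤ γ x + γ y)
    (hγ_smul : ∀ (c : ℝ) (x : Fin d → ℝ), γ (c • x) = |c| * γ x)
    (hγ_pos : ∀ x, γ x = 0 → x = 0)
    (hγ_os : ∀ (x ε : Fin d → ℝ), (∀ j, ε j = 1 ∨ ε j = -1) →
      γ (fun j => ε j * x j) = γ x) :
    ∃ R : ℝ, 0 ≤ R ∧ ∀ x, γ x ≤ 1 → ∀ j, |x j| ≤ R := by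
  have hpos : ∀ j, 0 < γ (Pi.single j 1) := fun j =>
    (osNorm_nonneg hγ_tri hγ_smul _).lt_of_ne' fun h => by
      have := congrFun (hγ_pos _ h) j
      simp at this
  refine ⟨∑ j, 1 / γ (Pi.single j 1), Finset.sum_nonneg fun j _ => by
    have := hpos j; positivity, fun x hx j => ?_⟩
  refine le_trans ?_ (Finset.single_le_sum (f := fun j => 1 / γ (Pi.single j 1))
    (fun k _ => by have := hpos k; positivity) (Finset.mem_univ j))
  rw [le_div_iff₀ (hpos j)]
  exact (coord_le_osNorm hγ_tri hγ_smul hγ_os x j).trans hx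

end Norm

/-! ### The regret bound -/

theorem statement4 (d n : ℕ) (hd : 1 ≤ d) (hn : 1 ≤ n)
    (γ : (Fin d → ℝ) → ℝ)
    (hγ_tri : ∀ x y, γ (x + y) ≤ γ x + γ y)
    (hγ_smul : ∀ (c : ℝ) (x : Fin d → ℝ), γ (c • x) = |c| * γ x)
    (hγ_pos : ∀ x, γ x = 0 → x = 0)
    (hγ_os : ∀ (x ε : Fin d → ℝ), (∀ j, ε j = 1 ∨ ε j = -1) →
      γ (fun j => ε j * x j) = γ x)
    (hγ_qc : QuadConvex {x : Fin d → ℝ | γ x ≤ 1})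
    (Θ : Set (Fin d → ℝ)) (hΘne : Θ.Nonempty) (hΘc : IsCompact Θ)
    (hΘconv : Convex ℝ Θ) (hΘqc : QuadConvex Θ) (hΘos : OrthoSymm Θ) :
    ∀ ε > 0, ∃ lam : Fin d → ℝ, (∀ j, 0 < lam j) ∧
      ∀ g : Fin n → Fin d → ℝ, (∀ i, γ (g i) ≤ 1) →
      ∀ θ ∈ Θ,
        dsgRegret d n lam g θ ≤
          Real.sqrt n * sSup (dualNorm d γ '' Θ) + ε := by
  intro ε hε
  obtain ⟨R, hR0, hR⟩ := exists_coord_bound hγ_tri hγ_smul hγ_pos hγ_os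
  obtain ⟨C, hC⟩ := hΘc.isBounded.exists_norm_le
  have hCj : ∀ θ ∈ Θ, ∀ j, |θ j| ≤ C := fun θ hθ j => (norm_le_pi_norm θ j).trans (hC θ hθ)
  have hC0 : 0 ≤ C := (norm_nonneg _).trans (hC _ hΘne.some_mem)
  have hBc : IsCompact {x : Fin d → ℝ | γ x ≤ 1} := by
    refine Metric.isCompact_of_isClosed_isBounded
      (isClosed_le (osNorm_continuous hγ_tri hγ_smul) continuous_const)
      (isBounded_iff_forall_norm_le.2 ⟨R, fun x hx => ?_⟩)
    exact (pi_norm_le_iff_of_nonneg hR0).2 fun j => hR x hx j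
  have hBne : {x : Fin d → ℝ | γ x ≤ 1}.Nonempty :=
    ⟨0, by have : γ 0 = 0 := by simpa using hγ_smul 0 0
           simp [this]⟩
  have hpair : ∀ x, γ x ≤ 1 → ∀ θ ∈ Θ, ∑ j, x j * θ j ≤ d * (R * C) := by
    intro x hx θ hθ
    calc _ ≤ ∑ _j : Fin d, R * C := Finset.sum_le_sum fun j _ => (le_abs_self _).trans (by
          rw [abs_mul]
          exact mul_le_mul (hR x hx j) (hCj θ hθ j) (abs_nonneg _) hR0)
      _ = _ := by simp
  -- Both suprema are over bounded nonempty sets, so no junk values of `sSup` arise.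
  have hV : ∀ x, γ x ≤ 1 → ∀ θ ∈ Θ, ∑ j, x j * θ j ≤ sSup (dualNorm d γ '' Θ) := by
    intro x hx θ hθ
    have h1 : ∑ j, x j * θ j ≤ dualNorm d γ θ :=
      le_csSup ⟨d * (R * C), by rintro _ ⟨y, hy, rfl⟩; exact hpair y hy θ hθ⟩ ⟨x, hx, rfl⟩
    refine h1.trans (le_csSup ⟨d * (R * C), ?_⟩ ⟨θ, hθ, rfl⟩)
    rintro _ ⟨θ', hθ', rfl⟩
    refine csSup_le ⟨_, x, hx, rfl⟩ ?_
    rintro _ ⟨y, hy, rfl⟩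
    exact hpair y hy θ' hθ'
  have hsqc : Continuous fun (θ : Fin d → ℝ) (j : Fin d) => (θ j) ^ 2 := by fun_prop
  obtain ⟨lam, hlam, hle⟩ := exists_weights_s4 hn _ _ (hΘc.image hsqc) (hBc.image hsqc)
    (hΘne.image _) (hBne.image _) hΘqc hγ_qc (M := R ^ 2 + C ^ 2)
    (by
      rintro _ ⟨θ, hθ, rfl⟩ j
      have := sq_le_sq' (abs_le.1 (hCj θ hθ j)).1 (abs_le.1 (hCj θ hθ j)).2
      exact ⟨sq_nonneg _, by dsimp only; nlinarith [sq_nonneg R]⟩)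
    (by
      rintro _ ⟨x, hx, rfl⟩ j
      have := sq_le_sq' (abs_le.1 (hR x hx j)).1 (abs_le.1 (hR x hx j)).2
      exact ⟨sq_nonneg _, by dsimp only; nlinarith [sq_nonneg C]⟩)
    (V := sSup (dualNorm d γ '' Θ))
    (by
      rintro _ ⟨θ, hθ, rfl⟩ _ ⟨x, hx, rfl⟩
      obtain ⟨e, he, hez⟩ := exists_sign x θ
      refine le_trans (le_of_eq ?_) (hV (fun j => e j * x j) ((hγ_os x e he).trans_le hx) θ hθ)
      refine Finset.sum_congr rfl fun j _ => ?_
      rw [hez j, ← mul_pow, Real.sqrt_sq_eq_abs, mul_comm])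
    hε
  refine ⟨lam, hlam, fun g hg θ hθ => (dsgRegret_le hlam g θ).trans ?_⟩
  have hnpos : (0 : ℝ) < n := by exact_mod_cast hn
  -- The bound of `dsgRegret_le` is the average over rounds of the weighted objective at `(θ², gᵢ²)`.
  have havg : (n : ℝ) * ∑ j, (lam j * θ j ^ 2 / 2 + (∑ i, g i j ^ 2) / (2 * lam j))
      = ∑ i : Fin n, ∑ j, (lam j * θ j ^ 2 / 2 + n * g i j ^ 2 / (2 * lam j)) := by
    rw [Finset.sum_comm, Finset.mul_sum]
    refine Finset.sum_congr rfl fun j _ => ?_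
    rw [Finset.sum_add_distrib, Finset.sum_const, Finset.card_univ, Fintype.card_fin,
      nsmul_eq_mul, ← Finset.sum_div, ← Finset.mul_sum]
    ring
  have hbound : ∑ i : Fin n, ∑ j, (lam j * θ j ^ 2 / 2 + n * g i j ^ 2 / (2 * lam j))
      ≤ n * (√n * sSup (dualNorm d γ '' Θ) + ε) := by
    calc _ ≤ ∑ _i : Fin n, (√n * sSup (dualNorm d γ '' Θ) + ε) :=
          Finset.sum_le_sum fun i _ => hle _ ⟨θ, hθ, rfl⟩ _ ⟨g i, hg i, rfl⟩
      _ = _ := by rw [Finset.sum_const, Finset.card_univ, Fintype.card_fin, nsmul_eq_mul]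
  rw [← havg] at hbound
  exact le_of_mul_le_mul_left hbound hnpos
end

section
/- Let d, n ≥ 1, let γ be any norm on ℝ^d, let Θ ⊆ ℝ^d be nonempty, compact, convex, quadratically convex and orthosymmetric, and let k ∈ ℕ. Then there exists a hard instance (𝒳, F, 𝒫) for (Θ, γ, n) such that every estimator θ̂ : 𝒳ⁿ → ℝ^d satisfies sup_{P∈𝒫} E[f_P(θ̂(X₁,…,Xₙ)) − inf_{θ∈Θ} f_P(θ)] ≥ (1/(8√(n log 3))) · (1 − k/(n log 3)) · sup{ (Σ_{j=1}^d θ_j²/γ(e_j)²)^{1/2} : θ ∈ Θ with at most k nonzero coordinates }, where e₁,…,e_d are the standard basis vectors. -/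
/-!
The lower bound is a coordinatewise two-point (Assouad) argument. Let `a ∈ Θ` be a nonnegative
`k`-sparse maximizer of `σ² = ∑ a_j² / γ(e_j)²` (it exists by compactness, and may be taken
nonnegative by orthosymmetry). An observation is a pair `(j, b)` of a coordinate and a sign, with
loss `F(θ, (j, b)) = |θ_j - b a_j| / γ(e_j)`; its subgradients are multiples `c e_j` with
`|c| ≤ 1 / γ(e_j)`. For a sign pattern `v`, the distribution `P_v` picks `j` with probability
`p_j = a_j² / (γ(e_j)² σ²)` and then the sign `v_j` with probability `(1 + δ_j) / 2`.

The point `(v_j a_j)_j ∈ Θ` is optimal for `P_v`, and guessing the sign of coordinate `j` wrongly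
costs at least `p_j δ_j a_j / γ(e_j)` (`excess_ge`). Flipping `v_j` changes the distribution of the
`n` observations so little (Bhattacharyya coefficient `≥ √3 / 2`, total variation `≤ 1/2`) that on
average over `v` any estimator errs with probability at least `1/4` (`two_point`,
`avg_error`), provided
`δ_j ≤ 1/2` and `4 n p_j δ_j² log 3 ≤ 1`. The choice `δ_j = 1 / (2 √(n p_j log 3))` when
`p_j n log 3 ≥ 1`, and `δ_j = 0` otherwise, gives the bound: the coordinates thrown away have total
mass at most `k / (n log 3)`, since only `k` of the `p_j` are nonzero.

When the claimed bound is nonpositive, the zero loss is a valid instance.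
-/

open Finset

/-- The real number `±1` encoded by a Boolean. -/
def sgn (b : Bool) : ℝ := if b then 1 else -1

/-- The probability of the observation `(j, b)` under the sign pattern `v`. -/
noncomputable def obsProb {d : ℕ} (p δ : Fin d → ℝ) (v : Fin d → Bool) (z : Fin d × Bool) : ℝ :=
  p z.1 * ((1 + sgn z.2 * sgn (v z.1) * δ z.1) / 2)

/-- The loss `|θ_j - b a_j| / c_j` of the observation `(j, b)`. -/
noncomputable def obsLoss {d : ℕ} (a c : Fin d → ℝ) (θ : Fin d → ℝ) (z : Fin d × Bool) : ℝ :=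
  |θ z.1 - sgn z.2 * a z.1| / c z.1

/-! ### Testing two product distributions -/

/-- Le Cam's bound on the sum of the two testing errors, in terms of the Bhattacharyya
coefficient. -/
lemma le_cam {Y : Type*} [Fintype Y] (P Q : Y → ℝ) (hP : ∀ y, 0 ≤ P y) (hQ : ∀ y, 0 ≤ Q y)
    (hP1 : ∑ y, P y = 1) (hQ1 : ∑ y, Q y = 1)
    (hBC : 3 / 4 ≤ (∑ y, √(P y * Q y)) ^ 2) :
    1 / 2 ≤ ∑ y, min (P y) (Q y) := by
  have h1 : ∑ y, max (P y) (Q y) = 2 - ∑ y, min (P y) (Q y) := by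
    have : ∑ y, (min (P y) (Q y) + max (P y) (Q y)) = ∑ y, (P y + Q y) :=
      Finset.sum_congr rfl fun y _ => min_add_max _ _
    rw [Finset.sum_add_distrib, Finset.sum_add_distrib] at this
    linarith
  have h2 : (∑ y, √(P y * Q y)) ^ 2 ≤ (∑ y, min (P y) (Q y)) * ∑ y, max (P y) (Q y) := by
    have := Finset.sum_mul_sq_le_sq_mul_sq Finset.univ (fun y => √(min (P y) (Q y)))
      (fun y => √(max (P y) (Q y)))
    have hmin : ∀ y, 0 ≤ min (P y) (Q y) := fun y => le_min (hP y) (hQ y)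
    have hmax : ∀ y, 0 ≤ max (P y) (Q y) := fun y => le_max_of_le_left (hP y)
    simp only [Real.sq_sqrt (hmin _), Real.sq_sqrt (hmax _), ← Real.sqrt_mul (hmin _),
      min_mul_max] at this
    exact this
  rw [h1] at h2
  nlinarith

/-- Two tests of `n` observations, at least one of which always rejects, have total error at least
`1/2` when the one-observation Bhattacharyya coefficient is `1 - u` with `2 n u ≤ 1/4`: the
coefficient tensorizes, and Bernoulli's inequality gives `(1 - u) ^ (2 n) ≥ 3/4`. -/
lemma two_point {X : Type*} [Fintype X] (n : ℕ) (P Q : X → ℝ)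
    (hP : ∀ y, 0 ≤ P y) (hQ : ∀ y, 0 ≤ Q y)
    (hP1 : ∑ y, P y = 1) (hQ1 : ∑ y, Q y = 1) (u : ℝ) (hu : 2 * n * u ≤ 1 / 4) (hu1 : u ≤ 1)
    (hBC : ∑ y, √(P y * Q y) = 1 - u)
    (A B : (Fin n → X) → Prop) [DecidablePred A] [DecidablePred B] (hAB : ∀ xs, A xs ∨ B xs) :
    1 / 2 ≤ ∑ xs : Fin n → X, (∏ i, P (xs i)) * (if A xs then 1 else 0) +
      ∑ xs : Fin n → X, (∏ i, Q (xs i)) * (if B xs then 1 else 0) := by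
  have hPn : ∀ xs : Fin n → X, 0 ≤ ∏ i, P (xs i) := fun xs => Finset.prod_nonneg fun i _ => hP _
  have hQn : ∀ xs : Fin n → X, 0 ≤ ∏ i, Q (xs i) := fun xs => Finset.prod_nonneg fun i _ => hQ _
  have key := le_cam (fun xs : Fin n → X => ∏ i, P (xs i)) (fun xs => ∏ i, Q (xs i)) hPn hQn
    (by rw [← Fintype.sum_pow, hP1, one_pow]) (by rw [← Fintype.sum_pow, hQ1, one_pow]) (by
      have : ∑ xs : Fin n → X, √((∏ i, P (xs i)) * ∏ i, Q (xs i)) = (1 - u) ^ n := by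
        rw [← hBC, Fintype.sum_pow]
        refine Finset.sum_congr rfl fun xs _ => ?_
        rw [← Finset.prod_mul_distrib, Real.sqrt_prod]
        exact fun i _ => mul_nonneg (hP _) (hQ _)
      rw [this, ← pow_mul]
      have := one_add_mul_le_pow (a := -u) (by linarith) (n * 2)
      push_cast at this
      rw [← sub_eq_add_neg] at this
      linarith)
  refine key.trans ?_
  rw [← Finset.sum_add_distrib]
  refine Finset.sum_le_sum fun xs _ => ?_
  have h1 := hPn xs
  have h2 := hQn xs
  rcases hAB xs with h | h
  · rw [if_pos h]
    refine (min_le_left _ _).trans ?_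
    split_ifs <;> linarith
  · rw [if_pos h]
    refine (min_le_right _ _).trans ?_
    split_ifs <;> linarith

/-! ### The instance -/

lemma sgn_sq (b : Bool) : sgn b * sgn b = 1 := by cases b <;> simp [sgn]

lemma obsProb_nonneg {d : ℕ} (p δ : Fin d → ℝ) (hp : ∀ j, 0 ≤ p j) (hδ : ∀ j, 0 ≤ δ j)
    (hδ1 : ∀ j, δ j ≤ 1 / 2) (v : Fin d → Bool) (z : Fin d × Bool) : 0 ≤ obsProb p δ v z := by
  have h0 := hδ z.1
  have h1 := hδ1 z.1
  refine mul_nonneg (hp _) ?_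
  cases z.2 <;> cases v z.1 <;> simp [sgn] <;> linarith

lemma obsProb_sum {d : ℕ} (p δ : Fin d → ℝ) (hp1 : ∑ j, p j = 1) (v : Fin d → Bool) :
    ∑ z, obsProb p δ v z = 1 := by
  rw [Fintype.sum_prod_type, ← hp1]
  refine Finset.sum_congr rfl fun j _ => ?_
  cases hv : v j <;> simp [obsProb, sgn, hv] <;> ring

/-- The Bhattacharyya coefficient of two sign patterns that differ in the coordinate `j` only. -/
lemma obsProb_bc {d : ℕ} (p δ : Fin d → ℝ) (hp : ∀ j, 0 ≤ p j) (hδ : ∀ j, 0 ≤ δ j)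
    (hδ1 : ∀ j, δ j ≤ 1 / 2) (hp1 : ∑ j, p j = 1) (v : Fin d → Bool) (j : Fin d) :
    ∑ z, √(obsProb p δ v z * obsProb p δ (Function.update v j (!v j)) z) =
      1 - p j * (1 - √(1 - δ j ^ 2)) := by
  have hnn := obsProb_nonneg p δ hp hδ hδ1 v
  have hs := obsProb_sum p δ hp1 v
  have hterm : ∀ i, ∑ b, √(obsProb p δ v (i, b) * obsProb p δ (Function.update v j (!v j)) (i, b))
      = p i - if i = j then p i * (1 - √(1 - δ i ^ 2)) else 0 := by
    intro i
    by_cases h : i = j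
    · subst h
      have e : ∀ b, obsProb p δ v (i, b) * obsProb p δ (Function.update v i (!v i)) (i, b) =
          (p i / 2) ^ 2 * (1 - δ i ^ 2) := by
        intro b
        cases b <;> cases hv : v i <;> simp [obsProb, sgn, hv] <;> ring
      have hp2 : 0 ≤ p i / 2 := by have := hp i; linarith
      simp only [e, Real.sqrt_mul (sq_nonneg (p i / 2)), Real.sqrt_sq hp2]
      simp
      ring
    · have e : ∀ b, obsProb p δ (Function.update v j (!v j)) (i, b) = obsProb p δ v (i, b) := by
        intro b
        simp [obsProb, Function.update_of_ne h]
      simp only [e, Real.sqrt_mul_self (hnn _)]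
      cases hv : v i <;> simp [obsProb, h, sgn, hv] <;> ring
  rw [Fintype.sum_prod_type, Finset.sum_congr rfl fun i _ => hterm i, Finset.sum_sub_distrib, hp1]
  simp

/-- Guessing the sign of a coordinate wrongly costs at least `p_j δ_j a_j / c_j`. -/
lemma excess_ge {d : ℕ} (p δ a c : Fin d → ℝ) (hp : ∀ j, 0 ≤ p j) (hδ : ∀ j, 0 ≤ δ j)
    (hδ1 : ∀ j, δ j ≤ 1 / 2) (ha : ∀ j, 0 ≤ a j) (hc : ∀ j, 0 < c j) (v : Fin d → Bool)
    (θ : Fin d → ℝ) :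
    ∑ j, p j * δ j * (a j / c j) * (if sgn (v j) * θ j ≤ 0 then 1 else 0) ≤
      ∑ z, obsProb p δ v z * obsLoss a c θ z -
        ∑ z, obsProb p δ v z * obsLoss a c (fun j => sgn (v j) * a j) z := by
  rw [Fintype.sum_prod_type, Fintype.sum_prod_type, ← Finset.sum_sub_distrib]
  refine Finset.sum_le_sum fun j _ => ?_
  -- The one-dimensional inequality, with the sign pattern moved into `t = v_j θ_j`.
  have main : ∀ t : ℝ, δ j * a j * (if t ≤ 0 then 1 else 0) ≤
      (1 + δ j) / 2 * |t - a j| + (1 - δ j) / 2 * |t + a j| - (1 - δ j) * a j := by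
    intro t
    have h0 := hδ j
    have h1 := hδ1 j
    have h2 := ha j
    have l1 := neg_le_abs (t - a j)
    have l2 := le_abs_self (t - a j)
    have l3 := le_abs_self (t + a j)
    have l4 := neg_le_abs (t + a j)
    split_ifs with h
    · nlinarith
    · nlinarith
  have hcj := hc j
  have key := main (sgn (v j) * θ j)
  have hpc : 0 ≤ p j / c j := div_nonneg (hp j) hcj.le
  have := mul_le_mul_of_nonneg_left key hpc
  have e1 : p j * δ j * (a j / c j) * (if sgn (v j) * θ j ≤ 0 then 1 else 0) =
    p j / c j * (δ j * a j * (if sgn (v j) * θ j ≤ 0 then 1 else 0)) := by ring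
  rw [e1]
  refine this.trans (le_of_eq ?_)
  have haj : |a j + a j| = 2 * a j := by rw [abs_of_nonneg (by linarith [ha j])]; ring
  have haj' : |-a j - a j| = 2 * a j := by
    rw [show -a j - a j = -(a j + a j) by ring, abs_neg, haj]
  cases hv : v j
  · have r1 : |-θ j - a j| = |θ j + a j| := by
      rw [show -θ j - a j = -(θ j + a j) by ring, abs_neg]
    have r2 : |-θ j + a j| = |θ j - a j| := by
      rw [show -θ j + a j = -(θ j - a j) by ring, abs_neg]
    simp [obsProb, obsLoss, sgn, hv, r1, r2, haj']
    ring
  · simp [obsProb, obsLoss, sgn, hv, haj]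
    ring

lemma convexOn_obsLoss {d : ℕ} (a c : Fin d → ℝ) (hc : ∀ j, 0 < c j) (z : Fin d × Bool) :
    ConvexOn ℝ Set.univ (fun θ => obsLoss a c θ z) := by
  refine ⟨convex_univ, fun x _ y _ s t hs ht hst => ?_⟩
  simp only [obsLoss, Pi.add_apply, Pi.smul_apply, smul_eq_mul]
  rw [← mul_div_assoc, ← mul_div_assoc, ← add_div]
  refine div_le_div_of_nonneg_right ?_ (hc _).le
  have e : s * x z.1 + t * y z.1 - sgn z.2 * a z.1 =
      s * (x z.1 - sgn z.2 * a z.1) + t * (y z.1 - sgn z.2 * a z.1) := by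
    linear_combination (sgn z.2 * a z.1) * hst
  rw [e]
  refine (abs_add_le _ _).trans ?_
  rw [abs_mul, abs_mul, abs_of_nonneg hs, abs_of_nonneg ht]

/-- A subgradient of `θ ↦ |θ_j - r| / c_j` is supported on `j`, where it is at most `1 / c_j`. -/
lemma subgradient_bound {d : ℕ} (γ : (Fin d → ℝ) → ℝ)
    (hγ_smul : ∀ (c : ℝ) (x : Fin d → ℝ), γ (c • x) = |c| * γ x)
    (a c : Fin d → ℝ) (hcγ : ∀ j, c j = γ (Pi.single j 1)) (hc : ∀ j, 0 < c j) (z : Fin d × Bool)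
    (θ g : Fin d → ℝ) (h : IsSubgradientAt (fun t => obsLoss a c t z) θ g) : γ g ≤ 1 := by
  have hstep : ∀ (i : Fin d) (t : ℝ),
      obsLoss a c θ z + g i * t ≤ obsLoss a c (Function.update θ i (θ i + t)) z := by
    intro i t
    have := h (Function.update θ i (θ i + t))
    rw [Finset.sum_eq_single i] at this
    · simpa using this
    · intro b _ hb
      simp [Function.update_of_ne hb]
    · simp
  have hzero : ∀ i, i ≠ z.1 → g i = 0 := by
    intro i hi
    have h1 := hstep i 1
    have h2 := hstep i (-1)
    simp only [obsLoss, Function.update_of_ne hi.symm] at h1 h2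
    linarith
  have hg : g = g z.1 • Pi.single z.1 1 := by
    ext i
    by_cases hi : i = z.1
    · subst hi; simp
    · simp [hzero i hi, hi]
  have habs : |g z.1| * c z.1 ≤ 1 := by
    have hcz := hc z.1
    have hb : ∀ t : ℝ, |t| = 1 → g z.1 * t * c z.1 ≤ 1 := by
      intro t ht
      have h1 := hstep z.1 t
      simp only [obsLoss, Function.update_self] at h1
      have h2 : |θ z.1 + t - sgn z.2 * a z.1| ≤ |θ z.1 - sgn z.2 * a z.1| + 1 := by
        rw [← ht, show θ z.1 + t - sgn z.2 * a z.1 = (θ z.1 - sgn z.2 * a z.1) + t by ring]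
        exact abs_add_le _ _
      have h3 := div_le_div_of_nonneg_right h2 hcz.le
      rw [add_div] at h3
      have h4 : g z.1 * t ≤ 1 / c z.1 := by linarith
      rwa [le_div_iff₀ hcz] at h4
    rcases abs_choice (g z.1) with hh | hh <;> rw [hh]
    · simpa using hb 1 (by simp)
    · simpa using hb (-1) (by simp)
  rw [hg, hγ_smul, ← hcγ]
  exact habs

/-! ### The average over sign patterns -/

lemma log_three_ge : (1.08 : ℝ) ≤ Real.log 3 := by
  rw [Real.le_log_iff_exp_le (by norm_num)]
  have h := Real.exp_one_lt_d9
  have e : Real.exp 1.08 = Real.exp 1 * Real.exp 0.08 := by rw [← Real.exp_add]; norm_num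
  have h2 : Real.exp 0.08 ≤ 1 / (1 - 0.08) := Real.exp_bound_div_one_sub_of_interval (by norm_num)
    (by norm_num)
  rw [e]
  have := Real.exp_pos 1
  have h3 : (1 : ℝ) / (1 - 0.08) ≤ 1.09 := by norm_num
  nlinarith [Real.exp_pos (0.08 : ℝ)]

/-- Over a uniformly random sign pattern, coordinate `j` is misjudged with probability at least
`1/4`. -/
lemma avg_error {d : ℕ} (n : ℕ) (p δ : Fin d → ℝ) (hp : ∀ j, 0 ≤ p j) (hδ : ∀ j, 0 ≤ δ j)
    (hδ1 : ∀ j, δ j ≤ 1 / 2) (hp1 : ∑ j, p j = 1)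
    (hn : ∀ j, 4 * (n * p j * δ j ^ 2 * Real.log 3) ≤ 1) (j : Fin d)
    {X : Type*} [Fintype X] (e : X ≃ Fin d × Bool) (est : (Fin n → X) → (Fin d → ℝ)) :
    (Fintype.card (Fin d → Bool) : ℝ) / 4 ≤ ∑ v : Fin d → Bool, ∑ xs : Fin n → X,
      (∏ i, obsProb p δ v (e (xs i))) * (if sgn (v j) * est xs j ≤ 0 then 1 else 0) := by
  set G : (Fin d → Bool) → ℝ := fun v => ∑ xs : Fin n → X,
      (∏ i, obsProb p δ v (e (xs i))) * (if sgn (v j) * est xs j ≤ 0 then 1 else 0) with hG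
  let flip : (Fin d → Bool) → (Fin d → Bool) := fun v => Function.update v j (!v j)
  have hflip : Function.Involutive flip := by
    intro v
    simp [flip]
  have hsum : ∑ v, G (flip v) = ∑ v, G v := Equiv.sum_comp hflip.toPerm G
  have hpj := hp j
  have hs0 := Real.sqrt_nonneg (1 - δ j ^ 2)
  have hδj := hδ j
  have hδj1 := hδ1 j
  have hpj1 : p j ≤ 1 := hp1 ▸ Finset.single_le_sum (fun i _ => hp i) (Finset.mem_univ j)
  -- `0.54` works for `δ ≤ 1/2` and satisfies `2 * 0.54 ≤ log 3`, as the choice of `δ` requires.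
  have hsq : 1 - 0.54 * δ j ^ 2 ≤ √(1 - δ j ^ 2) := by
    apply Real.le_sqrt_of_sq_le
    have : δ j ^ 2 ≤ 1 / 4 := by nlinarith
    nlinarith [sq_nonneg (δ j)]
  have hpair : ∀ v, 1 / 2 ≤ G v + G (flip v) := by
    intro v
    refine two_point n (fun x => obsProb p δ v (e x)) (fun x => obsProb p δ (flip v) (e x))
      (fun x => obsProb_nonneg p δ hp hδ hδ1 _ _) (fun x => obsProb_nonneg p δ hp hδ hδ1 _ _)
      ?_ ?_ (p j * (1 - √(1 - δ j ^ 2))) ?_ ?_ ?_ _ _ ?_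
    · rw [Equiv.sum_comp e, obsProb_sum p δ hp1]
    · rw [Equiv.sum_comp e, obsProb_sum p δ hp1]
    · have h1 : p j * (1 - √(1 - δ j ^ 2)) ≤ p j * (0.54 * δ j ^ 2) :=
        mul_le_mul_of_nonneg_left (by linarith) hpj
      have h2 : (n : ℝ) * (p j * (1 - √(1 - δ j ^ 2))) ≤ n * (p j * (0.54 * δ j ^ 2)) :=
        mul_le_mul_of_nonneg_left h1 (Nat.cast_nonneg n)
      have h3 : 0 ≤ n * p j * δ j ^ 2 := by positivity
      have h4 := mul_le_mul_of_nonneg_left log_three_ge h3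
      have h5 := hn j
      nlinarith
    · nlinarith
    · rw [← obsProb_bc p δ hp hδ hδ1 hp1 v j]
      exact Equiv.sum_comp e (fun z => √(obsProb p δ v z * obsProb p δ (flip v) z))
    · intro xs
      have : sgn (flip v j) = - sgn (v j) := by
        cases hv : v j <;> simp [flip, sgn, hv]
      rw [this]
      rcases le_total (sgn (v j) * est xs j) 0 with h | h
      · exact Or.inl h
      · right; linarith
  have htot : ∑ _v : Fin d → Bool, (1 / 2 : ℝ) ≤ ∑ v, (G v + G (flip v)) :=
    Finset.sum_le_sum fun v _ => hpair v
  rw [Finset.sum_add_distrib, hsum, Finset.sum_const, Finset.card_univ, nsmul_eq_mul] at htot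
  linarith

/-- The lower bound for arbitrary admissible mixing weights `p` and biases `δ`. -/
lemma hard_instance_of_params {d n : ℕ} (γ : (Fin d → ℝ) → ℝ)
    (hγ_smul : ∀ (c : ℝ) (x : Fin d → ℝ), γ (c • x) = |c| * γ x)
    (Θ : Set (Fin d → ℝ)) (hΘos : OrthoSymm Θ)
    (p δ a c : Fin d → ℝ) (hp : ∀ j, 0 ≤ p j) (hδ : ∀ j, 0 ≤ δ j)
    (hδ1 : ∀ j, δ j ≤ 1 / 2) (hp1 : ∑ j, p j = 1)
    (hn : ∀ j, 4 * (n * p j * δ j ^ 2 * Real.log 3) ≤ 1)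
    (ha : ∀ j, 0 ≤ a j) (haΘ : a ∈ Θ)
    (hcγ : ∀ j, c j = γ (Pi.single j 1)) (hc : ∀ j, 0 < c j)
    (bound : ℝ) (hb : bound ≤ (∑ j, p j * δ j * (a j / c j)) / 4) :
    ∃ (m K : ℕ) (F : (Fin d → ℝ) → Fin m → ℝ) (P : Fin K → Fin m → ℝ),
      0 < m ∧ 0 < K ∧ IsHardInstance d n m K Θ γ F P bound := by
  have hd : Nonempty (Fin d) := by
    by_contra h
    rw [not_nonempty_iff] at h
    simp at hp1
  let e : Fin (Fintype.card (Fin d × Bool)) ≃ Fin d × Bool := (Fintype.equivFin _).symm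
  let f : Fin (Fintype.card (Fin d → Bool)) ≃ (Fin d → Bool) := (Fintype.equivFin _).symm
  refine ⟨_, _, fun θ x => obsLoss a c θ (e x), fun v x => obsProb p δ (f v) (e x),
    Fintype.card_pos, Fintype.card_pos, fun x => convexOn_obsLoss a c hc _,
    fun x θ g h => subgradient_bound γ hγ_smul a c hcγ hc (e x) θ g h,
    fun v x => obsProb_nonneg p δ hp hδ hδ1 _ _, fun v => ?_, fun est => ?_⟩
  · rw [Equiv.sum_comp e, obsProb_sum p δ hp1]
  set w : Fin d → ℝ := fun j => p j * δ j * (a j / c j) with hw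
  have hw0 : ∀ j, 0 ≤ w j := fun j =>
    mul_nonneg (mul_nonneg (hp j) (hδ j)) (div_nonneg (ha j) (hc j).le)
  set R : (Fin d → Bool) → ℝ := fun v => risk d n _ (fun x => obsProb p δ v (e x))
    (fun θ x => obsLoss a c θ (e x)) Θ est with hR
  have hrisk : ∀ v, ∑ j, w j * ∑ xs : Fin n → Fin (Fintype.card (Fin d × Bool)),
      (∏ i, obsProb p δ v (e (xs i))) * (if sgn (v j) * est xs j ≤ 0 then 1 else 0) ≤ R v := by
    intro v
    simp only [hR, risk, Finset.mul_sum]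
    rw [Finset.sum_comm]
    refine Finset.sum_le_sum fun xs _ => ?_
    have hprod : 0 ≤ ∏ i, obsProb p δ v (e (xs i)) :=
      Finset.prod_nonneg fun i _ => obsProb_nonneg p δ hp hδ hδ1 _ _
    have hloss : ∀ θ, expLoss (fun x => obsProb p δ v (e x)) (fun θ x => obsLoss a c θ (e x)) θ =
        ∑ z, obsProb p δ v z * obsLoss a c θ z := fun θ =>
      Equiv.sum_comp e (fun z => obsProb p δ v z * obsLoss a c θ z)
    have hmem : (fun j => sgn (v j) * a j) ∈ Θ :=
      hΘos a haΘ (fun j => sgn (v j)) (fun j => by cases v j <;> simp [sgn])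
    have hinf : sInf (expLoss (fun x => obsProb p δ v (e x))
        (fun θ x => obsLoss a c θ (e x)) '' Θ) ≤
        ∑ z, obsProb p δ v z * obsLoss a c (fun j => sgn (v j) * a j) z := by
      rw [← hloss]
      refine csInf_le ⟨0, ?_⟩ (Set.mem_image_of_mem _ hmem)
      rintro _ ⟨θ, _, rfl⟩
      exact Finset.sum_nonneg fun x _ => mul_nonneg (obsProb_nonneg p δ hp hδ hδ1 _ _)
        (div_nonneg (abs_nonneg _) (hc _).le)
    have hex := excess_ge p δ a c hp hδ hδ1 ha hc v (est xs)
    have e2 : ∑ j, w j * ((∏ i, obsProb p δ v (e (xs i))) *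
        (if sgn (v j) * est xs j ≤ 0 then 1 else 0)) = (∏ i, obsProb p δ v (e (xs i))) *
        ∑ j, p j * δ j * (a j / c j) * (if sgn (v j) * est xs j ≤ 0 then 1 else 0) := by
      rw [Finset.mul_sum]
      exact Finset.sum_congr rfl fun j _ => by simp only [hw]; ring
    rw [e2]
    refine mul_le_mul_of_nonneg_left ?_ hprod
    rw [hloss]
    linarith
  have hsum : ∑ _v : Fin d → Bool, bound ≤ ∑ v, R v := by
    refine le_trans ?_ (Finset.sum_le_sum fun v _ => hrisk v)
    rw [Finset.sum_comm]
    simp only [← Finset.mul_sum]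
    refine le_trans ?_ (Finset.sum_le_sum fun j _ => mul_le_mul_of_nonneg_left
      (avg_error n p δ hp hδ hδ1 hp1 hn j e est) (hw0 j))
    rw [← Finset.sum_mul, Finset.sum_const, Finset.card_univ, nsmul_eq_mul]
    have := mul_le_mul_of_nonneg_left hb
      (Nat.cast_nonneg (α := ℝ) (Fintype.card (Fin d → Bool)))
    refine this.trans (le_of_eq ?_)
    ring
  obtain ⟨v, _, hv⟩ := Finset.exists_le_of_sum_le Finset.univ_nonempty hsum
  exact ⟨f.symm v, by simpa [hR] using hv⟩

/-- If the bound is nonpositive, the zero loss is a valid instance. -/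
lemma hard_instance_of_nonpos {d n : ℕ} (γ : (Fin d → ℝ) → ℝ)
    (hγ_smul : ∀ (c : ℝ) (x : Fin d → ℝ), γ (c • x) = |c| * γ x)
    (Θ : Set (Fin d → ℝ)) (hΘne : Θ.Nonempty) (bound : ℝ) (hb : bound ≤ 0) :
    ∃ (m K : ℕ) (F : (Fin d → ℝ) → Fin m → ℝ) (P : Fin K → Fin m → ℝ),
      0 < m ∧ 0 < K ∧ IsHardInstance d n m K Θ γ F P bound := by
  refine ⟨1, 1, fun _ _ => 0, fun _ _ => 1, one_pos, one_pos, fun _ => convexOn_const 0 convex_univ,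
    fun x θ g h => ?_, fun _ _ => zero_le_one, fun _ => by simp, fun est => ⟨0, ?_⟩⟩
  · have hg : g = (0 : ℝ) • g := by
      have := h (θ + g)
      simp only [Pi.add_apply, add_sub_cancel_left, zero_add] at this
      have h0 := (Finset.sum_eq_zero_iff_of_nonneg fun j _ => mul_self_nonneg (g j)).1
        (le_antisymm this (Finset.sum_nonneg fun j _ => mul_self_nonneg (g j)))
      ext j
      simpa using h0 j (Finset.mem_univ j)
    rw [hg, hγ_smul]
    simp
  · have hz : expLoss (fun _ : Fin 1 => (1 : ℝ)) (fun (_ : Fin d → ℝ) _ => 0) = fun _ => 0 := by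
      ext θ; simp [expLoss]
    simpa [risk, hz, hΘne.image_const] using hb

/-! ### The choice of the parameters -/

lemma isClosed_sparse (d k : ℕ) :
    IsClosed {θ : Fin d → ℝ | (Finset.univ.filter (fun j => θ j ≠ 0)).card ≤ k} := by
  have : {θ : Fin d → ℝ | (Finset.univ.filter (fun j => θ j ≠ 0)).card ≤ k} =
      ⋃ S ∈ {S : Finset (Fin d) | S.card ≤ k}, {θ : Fin d → ℝ | ∀ j ∉ S, θ j = 0} := by
    ext θ
    simp only [Set.mem_ofPred_eq, Set.mem_iUnion, exists_prop]
    constructor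
    · intro h
      exact ⟨_, h, fun j hj => by simpa using hj⟩
    · rintro ⟨S, hS, h⟩
      refine (Finset.card_le_card fun j hj => ?_).trans hS
      by_contra hjS
      simp [h j hjS] at hj
  rw [this]
  refine (Set.toFinite _).isClosed_biUnion fun S _ => ?_
  simp only [Set.ofPred_forall]
  exact isClosed_iInter fun j => isClosed_iInter fun _ =>
    isClosed_eq (continuous_apply j) continuous_const

theorem statement5 (d n : ℕ) (hd : 1 ≤ d) (hn : 1 ≤ n) (k : ℕ)
    (γ : (Fin d → ℝ) → ℝ)
    (hγ_tri : ∀ x y, γ (x + y) ≤ γ x + γ y)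
    (hγ_smul : ∀ (c : ℝ) (x : Fin d → ℝ), γ (c • x) = |c| * γ x)
    (hγ_pos : ∀ x, γ x = 0 → x = 0)
    (Θ : Set (Fin d → ℝ)) (hΘne : Θ.Nonempty) (hΘc : IsCompact Θ)
    (hΘconv : Convex ℝ Θ) (hΘqc : QuadConvex Θ) (hΘos : OrthoSymm Θ) :
    ∃ (m K : ℕ) (F : (Fin d → ℝ) → Fin m → ℝ) (P : Fin K → Fin m → ℝ),
      0 < m ∧ 0 < K ∧
      IsHardInstance d n m K Θ γ F P
        ((1 / (8 * Real.sqrt (n * Real.log 3))) *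
          (1 - (k : ℝ) / (n * Real.log 3)) *
          sSup {t : ℝ | ∃ θ ∈ Θ,
            (Finset.univ.filter (fun j => θ j ≠ 0)).card ≤ k ∧
            t = Real.sqrt (∑ j, (θ j) ^ 2 / (γ (Pi.single j 1)) ^ 2)}) := by
  set T : Set ℝ := {t : ℝ | ∃ θ ∈ Θ,
            (Finset.univ.filter (fun j => θ j ≠ 0)).card ≤ k ∧
            t = Real.sqrt (∑ j, (θ j) ^ 2 / (γ (Pi.single j 1)) ^ 2)} with hT
  set N : ℝ := n * Real.log 3 with hN
  have hNpos : 0 < N := mul_pos (by exact_mod_cast hn) (Real.log_pos (by norm_num))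
  rcases le_or_gt (1 / (8 * √N) * (1 - (k : ℝ) / N) * sSup T) 0 with hb | hb
  · exact hard_instance_of_nonpos γ hγ_smul Θ hΘne _ hb
  have hT0 : 0 ≤ sSup T := Real.sSup_nonneg (by rintro _ ⟨θ, _, _, rfl⟩; exact Real.sqrt_nonneg _)
  have hTpos : 0 < sSup T := lt_of_le_of_ne hT0 fun h => by simp [← h] at hb
  have hfac : 0 < 1 / (8 * √N) * (1 - (k : ℝ) / N) := pos_of_mul_pos_left hb hT0
  have hTne : T.Nonempty := by
    by_contra h
    rw [Set.not_nonempty_iff_eq_empty] at h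
    simp [h] at hTpos
  set c : Fin d → ℝ := fun j => γ (Pi.single j 1) with hcdef
  have hc : ∀ j, 0 < c j := by
    intro j
    have h0 : γ 0 = 0 := by simpa using hγ_smul 0 0
    have h1 := hγ_tri (Pi.single j 1) ((-1 : ℝ) • Pi.single j 1)
    rw [hγ_smul] at h1
    simp [h0] at h1
    refine lt_of_le_of_ne (by simp only [hcdef]; linarith) fun h => ?_
    have := congrFun (hγ_pos _ h.symm) j
    simp at this
  obtain ⟨_, θ₀, hθ₀, hk₀, _⟩ := hTne
  obtain ⟨θ, ⟨hθΘ, hθk⟩, hmax⟩ := (hΘc.inter_right (isClosed_sparse d k)).exists_isMaxOn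
    ⟨θ₀, hθ₀, hk₀⟩ (f := fun θ => √(∑ j, (θ j) ^ 2 / (c j) ^ 2)) (by fun_prop)
  set σ : ℝ := √(∑ j, (θ j) ^ 2 / (c j) ^ 2) with hσ
  have hTσ : sSup T ≤ σ := by
    refine csSup_le ⟨_, θ₀, hθ₀, hk₀, rfl⟩ ?_
    rintro _ ⟨θ', h1, h2, rfl⟩
    exact hmax ⟨h1, h2⟩
  have hσpos : 0 < σ := hTpos.trans_le hTσ
  have hσ2 : σ ^ 2 = ∑ j, (θ j) ^ 2 / (c j) ^ 2 :=
    Real.sq_sqrt (Finset.sum_nonneg fun j _ => by positivity)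
  have haΘ : (fun j => |θ j|) ∈ Θ := by
    have := hΘos θ hθΘ (fun j => if 0 ≤ θ j then 1 else -1) (fun j => by
      split_ifs <;> simp)
    convert this using 2 with j
    split_ifs with h
    · rw [abs_of_nonneg h, one_mul]
    · rw [abs_of_neg (not_le.1 h)]; ring
  set q : Fin d → ℝ := fun j => |θ j| / (c j * σ) with hq
  have hq0 : ∀ j, 0 ≤ q j := fun j => div_nonneg (abs_nonneg _) (mul_pos (hc j) hσpos).le
  have hq1 : ∑ j, q j ^ 2 = 1 := by
    have : ∀ j, q j ^ 2 = (θ j) ^ 2 / (c j) ^ 2 / σ ^ 2 := by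
      intro j
      simp only [hq, div_pow, mul_pow, sq_abs, div_div]
    simp only [this, ← Finset.sum_div, ← hσ2]
    exact div_self (by positivity)
  -- The mixing weights are `p_j = q_j²`, so `√p_j = q_j`.
  set δ : Fin d → ℝ := fun j => if 1 ≤ q j ^ 2 * N then 1 / (2 * (q j * √N)) else 0 with hδ
  have hsN : 0 < √N := Real.sqrt_pos.2 hNpos
  have hsN2 : √N ^ 2 = N := Real.sq_sqrt hNpos.le
  have hqpos : ∀ j, 1 ≤ q j ^ 2 * N → 0 < q j := fun j h =>
    lt_of_le_of_ne (hq0 j) fun h0 => by rw [← h0] at h; norm_num at h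
  refine hard_instance_of_params γ hγ_smul Θ hΘos (fun j => q j ^ 2) δ (fun j => |θ j|) c
    (fun j => sq_nonneg _) ?_ ?_ hq1 ?_ (fun j => abs_nonneg _) haΘ (fun _ => rfl) hc _ ?_
  · intro j
    have := hq0 j
    simp only [hδ]
    split_ifs <;> positivity
  · intro j
    simp only [hδ]
    split_ifs with h
    · have h1 : 1 ≤ q j * √N := by
        have h0 : 0 ≤ q j * √N := mul_nonneg (hq0 j) hsN.le
        have : (q j * √N) ^ 2 = q j ^ 2 * N := by rw [mul_pow, hsN2]
        nlinarith
      exact one_div_le_one_div_of_le (by norm_num) (by linarith)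
    · norm_num
  · intro j
    simp only [hδ]
    split_ifs with h
    · have := hqpos j h
      rw [show 4 * (n * q j ^ 2 * (1 / (2 * (q j * √N))) ^ 2 * Real.log 3) =
        4 * (q j ^ 2 * N * (1 / (2 * (q j * √N))) ^ 2) by rw [hN]; ring, ← hsN2]
      refine le_of_eq ?_
      field_simp
      norm_num
    · norm_num
  · have hterm : ∀ j, q j ^ 2 * δ j * (|θ j| / c j) =
        σ / (2 * √N) * (q j ^ 2 - if 1 ≤ q j ^ 2 * N then 0 else q j ^ 2) := by
      intro j
      have hqc : |θ j| / c j = q j * σ := by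
        have := hc j
        simp only [hq]
        field_simp
      rw [hqc]
      simp only [hδ]
      split_ifs with h
      · have := hqpos j h
        field_simp
        ring
      · ring
    -- At most `k` of the discarded weights are nonzero, and each is below `1 / N`.
    have hsmall : ∑ j, (if 1 ≤ q j ^ 2 * N then 0 else q j ^ 2) ≤ k / N := by
      have h1 : ∀ j, (if 1 ≤ q j ^ 2 * N then 0 else q j ^ 2) ≤
          if θ j ≠ 0 then 1 / N else 0 := by
        intro j
        by_cases h0 : θ j = 0
        · simp [hq, h0]
        · rw [if_pos h0]
          split_ifs with h
          · positivity
          · rw [le_div_iff₀ hNpos]; exact (not_le.1 h).le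
      refine (Finset.sum_le_sum fun j _ => h1 j).trans ?_
      rw [← Finset.sum_filter, Finset.sum_const, nsmul_eq_mul, mul_one_div]
      exact div_le_div_of_nonneg_right (by exact_mod_cast hθk) hNpos.le
    rw [Finset.sum_congr rfl fun j _ => hterm j, ← Finset.mul_sum, Finset.sum_sub_distrib, hq1]
    calc 1 / (8 * √N) * (1 - (k : ℝ) / N) * sSup T ≤ 1 / (8 * √N) * (1 - (k : ℝ) / N) * σ :=
          mul_le_mul_of_nonneg_left hTσ hfac.le
      _ = σ / (8 * √N) * (1 - (k : ℝ) / N) := by ring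
      _ ≤ σ / (8 * √N) * (1 - ∑ j, if 1 ≤ q j ^ 2 * N then 0 else q j ^ 2) :=
          mul_le_mul_of_nonneg_left (by linarith) (by positivity)
      _ = _ := by ring
end

section
/- Let d ≥ 1, r ∈ [1,2], β ∈ (0,∞)^d, and let γ be the weighted norm γ(g) = (Σ_{j=1}^d (β_j|g_j|)^r)^{1/r} on ℝ^d. Let Θ ⊆ ℝ^d be nonempty, compact, convex, quadratically convex and orthosymmetric, and let n ≥ 2d. Then there exists a hard instance (𝒳, F, 𝒫) for (Θ, γ, n) such that every estimator θ̂ : 𝒳ⁿ → ℝ^d satisfies sup_{P∈𝒫} E[f_P(θ̂(X₁,…,Xₙ)) − inf_{θ∈Θ} f_P(θ)] ≥ (1/16) · (1/√n) · sup_{θ∈Θ} (Σ_{j=1}^d θ_j²/β_j²)^{1/2}. -/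
/-!
Let `θ*` maximise `∑ θ_j² / β_j²` over `Θ`, put `a_j = |θ*_j|`, `A_j = a_j / β_j` and
`S² = ∑ A_j²`. By orthosymmetry every vertex of the box `∏ [-a_j, a_j]` lies in `Θ`. An observation
is a pair `(j, s)` of a coordinate and a sign, with loss `|θ_j - s a_j| / β_j`; each subgradient is
supported on one coordinate, so its `γ`-norm is at most one whatever `r` is. For a sign vector `v`,
the law `P_v` picks `j` with probability `p_j = A_j² / S²` and then `s` with bias `δ_j` towards
`v_j`. The expected loss is minimised at the vertex `(v_j a_j)`, and a point whose `j`-th sign is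
wrong pays at least `p_j A_j δ_j` (`coord_excess`, `excess_lower`).

Laws whose sign vectors differ in one coordinate have Hellinger affinity at least `1 - p_j δ_j²`
(`affinity_lower`), and `n p_j δ_j² ≤ 4/25` keeps their `n`-fold products hard to tell apart
(`sum_min_prod_lower`). Averaging over all `v` and pairing `v` with its `j`-th flip (Assouad's
method, `assouad`) gives average risk at least `(1/4) (21/25)² ∑ p_j A_j δ_j`.
The choice `δ_j = (2/5) S / (√n A_j)` where `n p_j ≥ 4/25`, and `δ_j = 0` elsewhere, yields
`p_j A_j δ_j ≥ (2/5) (S / √n) (p_j - 4 / (25 n))`; as `n ≥ 2d`, these sum to at least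
`(2/5) (23/25) S / √n`, and `(1/4) (21/25)² (2/5) (23/25) > 1/16`.
-/


open Finset

/-- The sign encoded by a Boolean: `true` is `1` and `false` is `-1`. -/
def sg (b : Bool) : ℝ := if b then 1 else -1

/-- Probability of the observation `(j, s)` under the law indexed by the sign vector `v`:
coordinate `j` has mass `p j`, and its sign has bias `δ j` towards `v j`. -/
noncomputable def signLaw {d : ℕ} (p δ : Fin d → ℝ) (v : Fin d → Bool) (y : Fin d × Bool) : ℝ :=
  p y.1 / 2 * (1 + sg (v y.1) * sg y.2 * δ y.1)

/-- The loss `|θ_j - s a_j| / β_j` at the observation `(j, s)`. -/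
noncomputable def absLoss {d : ℕ} (β a : Fin d → ℝ) (θ : Fin d → ℝ) (y : Fin d × Bool) : ℝ :=
  1 / β y.1 * |θ y.1 - sg y.2 * a y.1|

/-- The sign vector `v` with its `j`-th sign reversed. -/
def flipAt {d : ℕ} (j : Fin d) (v : Fin d → Bool) : Fin d → Bool := Function.update v j (!v j)

lemma flipAt_involutive {d : ℕ} (j : Fin d) : Function.Involutive (flipAt j) := by
  intro v
  ext k
  by_cases h : k = j
  · subst h; simp [flipAt]
  · simp [flipAt, h]

/-! ### Subgradients -/

/-- A function that varies only with the `j`-th coordinate, at rate at most `1 / β j`, has all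
subgradients in the `γ`-unit ball. -/
lemma subgradient_bound_s6 {d : ℕ} (r : ℝ) (hr1 : 1 ≤ r) (β : Fin d → ℝ) (hβ : ∀ j, 0 < β j)
    (φ : (Fin d → ℝ) → ℝ) (j : Fin d) (hφ : ∀ θ θ', φ θ' - φ θ ≤ 1 / β j * |θ' j - θ j|)
    (θ g : Fin d → ℝ) (hg : IsSubgradientAt φ θ g) :
    (∑ k, (β k * |g k|) ^ r) ^ (1 / r) ≤ 1 := by
  have key : ∀ k (t : ℝ), g k * t ≤ 1 / β j * |if j = k then t else 0| := by
    intro k t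
    have h1 := hg (θ + Pi.single k t)
    have h2 := hφ θ (θ + Pi.single k t)
    have h3 : ∑ i, g i * ((θ + Pi.single k t : Fin d → ℝ) i - θ i) = g k * t := by
      simp [Pi.single_apply]
    have h4 : (θ + Pi.single k t : Fin d → ℝ) j - θ j = if j = k then t else 0 := by
      simp [Pi.single_apply]
    rw [h3] at h1
    rw [h4] at h2
    linarith
  have hz : ∀ k, k ≠ j → g k = 0 := by
    intro k hk
    have h1 := key k 1
    have h2 := key k (-1)
    simp only [if_neg (Ne.symm hk), abs_zero, mul_zero] at h1 h2
    linarith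
  have hj : β j * |g j| ≤ 1 := by
    have h1 := key j 1
    have h2 := key j (-1)
    simp only [if_true, abs_one, abs_neg, mul_one] at h1 h2
    have h3 : |g j| ≤ 1 / β j := abs_le.2 ⟨by linarith, h1⟩
    rw [le_div_iff₀ (hβ j)] at h3
    linarith
  have hr0 : r ≠ 0 := by linarith
  have hnn : 0 ≤ β j * |g j| := mul_nonneg (hβ j).le (abs_nonneg _)
  rw [Finset.sum_eq_single j]
  · exact Real.rpow_le_one (Real.rpow_nonneg hnn _) (Real.rpow_le_one hnn hj (by linarith))
      (by positivity)
  · intro k _ hk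
    simp [hz k hk, Real.zero_rpow hr0]
  · simp

lemma absLoss_convex {d : ℕ} (β a : Fin d → ℝ) (hβ : ∀ j, 0 < β j) (y : Fin d × Bool) :
    ConvexOn ℝ Set.univ (fun θ => absLoss β a θ y) := by
  refine ⟨convex_univ, ?_⟩
  intro x _ z _ s t hs ht hst
  have hb : 0 < 1 / β y.1 := one_div_pos.2 (hβ _)
  simp only [absLoss, Pi.add_apply, Pi.smul_apply, smul_eq_mul]
  have e : s * x y.1 + t * z y.1 - sg y.2 * a y.1 =
      s * (x y.1 - sg y.2 * a y.1) + t * (z y.1 - sg y.2 * a y.1) := by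
    linear_combination (sg y.2 * a y.1) * hst
  have h := abs_add_le (s * (x y.1 - sg y.2 * a y.1)) (t * (z y.1 - sg y.2 * a y.1))
  rw [← e, abs_mul, abs_mul, abs_of_nonneg hs, abs_of_nonneg ht] at h
  have := mul_le_mul_of_nonneg_left h hb.le
  linarith

lemma absLoss_lipschitz {d : ℕ} (β a : Fin d → ℝ) (hβ : ∀ j, 0 < β j) (y : Fin d × Bool)
    (θ θ' : Fin d → ℝ) :
    absLoss β a θ' y - absLoss β a θ y ≤ 1 / β y.1 * |θ' y.1 - θ y.1| := by
  have hb : 0 < 1 / β y.1 := one_div_pos.2 (hβ _)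
  have h := abs_sub_abs_le_abs_sub (θ' y.1 - sg y.2 * a y.1) (θ y.1 - sg y.2 * a y.1)
  rw [sub_sub_sub_cancel_right] at h
  have := mul_le_mul_of_nonneg_left h hb.le
  simp only [absLoss]
  linarith

/-! ### The sign laws -/

lemma signLaw_nonneg {d : ℕ} (p δ : Fin d → ℝ) (hp : ∀ j, 0 ≤ p j) (hδ0 : ∀ j, 0 ≤ δ j)
    (hδ1 : ∀ j, δ j ≤ 1) (v : Fin d → Bool) (y : Fin d × Bool) : 0 ≤ signLaw p δ v y := by
  have h0 := hδ0 y.1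
  have h1 := hδ1 y.1
  have h2 := hp y.1
  refine mul_nonneg (by linarith) ?_
  cases v y.1 <;> cases y.2 <;> simp [sg] <;> linarith

lemma signLaw_sum {d : ℕ} (p δ : Fin d → ℝ) (hp1 : ∑ j, p j = 1) (v : Fin d → Bool) :
    ∑ y, signLaw p δ v y = 1 := by
  rw [Fintype.sum_prod_type, ← hp1]
  refine Finset.sum_congr rfl fun k _ => ?_
  simp [signLaw, sg]
  ring

lemma affinity_lower {d : ℕ} (p δ : Fin d → ℝ) (hp : ∀ j, 0 ≤ p j) (hp1 : ∑ j, p j = 1)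
    (hδ0 : ∀ j, 0 ≤ δ j) (hδ1 : ∀ j, δ j ≤ 1) (v : Fin d → Bool) (j : Fin d) :
    1 - p j * δ j ^ 2 ≤
      ∑ y, Real.sqrt (signLaw p δ v y * signLaw p δ (flipAt j v) y) := by
  have e : ∑ y : Fin d × Bool,
      (if y.1 = j then p j / 2 * (1 - δ j ^ 2) else signLaw p δ v y) = 1 - p j * δ j ^ 2 := by
    rw [Fintype.sum_prod_type]
    have : ∀ k, (∑ s : Bool, if k = j then p j / 2 * (1 - δ j ^ 2) else signLaw p δ v (k, s)) =
        p k - if k = j then p j * δ j ^ 2 else 0 := by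
      intro k
      by_cases h : k = j
      · subst h; simp; ring
      · simp [h, signLaw, sg]; ring
    simp only [this, Finset.sum_sub_distrib, hp1]
    simp
  rw [← e]
  refine Finset.sum_le_sum fun y _ => ?_
  by_cases h : y.1 = j
  · rw [if_pos h]
    apply Real.le_sqrt_of_sq_le
    have h1 : signLaw p δ v y * signLaw p δ (flipAt j v) y = (p j / 2) ^ 2 * (1 - δ j ^ 2) := by
      simp only [signLaw, flipAt, h, Function.update_self]
      cases v j <;> cases y.2 <;> simp [sg] <;> ring
    rw [h1, mul_pow]
    have h2 : 0 ≤ δ j ^ 2 := sq_nonneg _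
    have h3 : δ j ^ 2 ≤ 1 := pow_le_one₀ (hδ0 j) (hδ1 j)
    exact mul_le_mul_of_nonneg_left (by nlinarith) (sq_nonneg _)
  · rw [if_neg h]
    have h1 : signLaw p δ (flipAt j v) y = signLaw p δ v y := by
      simp [signLaw, flipAt, h]
    rw [h1, Real.sqrt_mul_self (signLaw_nonneg p δ hp hδ0 hδ1 v y)]

/-! ### Testing between product laws -/

/-- The common mass of two `n`-fold products is at least half the squared affinity: this is
Cauchy–Schwarz for `√(PQ) = √(min P Q) √(max P Q)`, with `∑ max ≤ 2`. -/
lemma sum_min_prod_lower {ι : Type*} [Fintype ι] (n : ℕ) (P Q : ι → ℝ)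
    (hP : ∀ x, 0 ≤ P x) (hQ : ∀ x, 0 ≤ Q x) (hP1 : ∑ x, P x = 1) (hQ1 : ∑ x, Q x = 1)
    (c : ℝ) (hc : 0 ≤ c) (h : c ≤ (∑ x, Real.sqrt (P x * Q x)) ^ n) :
    c ^ 2 / 2 ≤ ∑ xs : Fin n → ι, min (∏ i, P (xs i)) (∏ i, Q (xs i)) := by
  classical
  have hA : ∀ xs : Fin n → ι, 0 ≤ ∏ i, P (xs i) := fun xs => Finset.prod_nonneg fun i _ => hP _
  have hB : ∀ xs : Fin n → ι, 0 ≤ ∏ i, Q (xs i) := fun xs => Finset.prod_nonneg fun i _ => hQ _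
  have hA1 : ∑ xs : Fin n → ι, ∏ i, P (xs i) = 1 := by
    rw [← Fintype.sum_pow, hP1, one_pow]
  have hB1 : ∑ xs : Fin n → ι, ∏ i, Q (xs i) = 1 := by
    rw [← Fintype.sum_pow, hQ1, one_pow]
  have hmax : ∑ xs : Fin n → ι, max (∏ i, P (xs i)) (∏ i, Q (xs i)) ≤ 2 := by
    calc _ ≤ ∑ xs : Fin n → ι, (∏ i, P (xs i) + ∏ i, Q (xs i)) :=
          Finset.sum_le_sum fun xs _ => max_le (by linarith [hB xs]) (by linarith [hA xs])
      _ = 2 := by rw [Finset.sum_add_distrib, hA1, hB1]; norm_num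
  have hmin0 : 0 ≤ ∑ xs : Fin n → ι, min (∏ i, P (xs i)) (∏ i, Q (xs i)) :=
    Finset.sum_nonneg fun xs _ => le_min (hA xs) (hB xs)
  have hcs := Finset.sum_sq_le_sum_mul_sum_of_sq_le_mul Finset.univ
    (r := fun xs : Fin n → ι => ∏ i, Real.sqrt (P (xs i) * Q (xs i)))
    (f := fun xs : Fin n → ι => min (∏ i, P (xs i)) (∏ i, Q (xs i)))
    (g := fun xs : Fin n → ι => max (∏ i, P (xs i)) (∏ i, Q (xs i)))
    (fun xs _ => le_min (hA xs) (hB xs)) (fun xs _ => le_max_of_le_left (hA xs))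
    (fun xs _ => by
      rw [min_mul_max, ← Finset.prod_pow, ← Finset.prod_mul_distrib]
      exact (Finset.prod_congr rfl fun i _ => Real.sq_sqrt (mul_nonneg (hP _) (hQ _))).le)
  rw [← Fintype.sum_pow (fun x => Real.sqrt (P x * Q x))] at hcs
  have h2 := pow_le_pow_left₀ hc h 2
  nlinarith

/-! ### The excess risk -/

/-- The one-dimensional excess loss, and its lower bound when the sign is guessed wrongly. -/
lemma coord_excess (a δ θ : ℝ) (h0 : 0 ≤ δ) (h1 : δ ≤ 1) (b : Bool) :
    (if b = decide (0 < θ) then 0 else δ * a) + (1 - δ) * a ≤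
      (1 + sg b * δ) / 2 * |θ - a| + (1 - sg b * δ) / 2 * |θ + a| := by
  have e1 : 0 ≤ (1 + δ) / 2 := by linarith
  have e2 : 0 ≤ (1 - δ) / 2 := by linarith
  have m1 := mul_le_mul_of_nonneg_left (le_abs_self (θ - a)) e1
  have m2 := mul_le_mul_of_nonneg_left (neg_le_abs (θ - a)) e1
  have m3 := mul_le_mul_of_nonneg_left (le_abs_self (θ + a)) e1
  have m4 := mul_le_mul_of_nonneg_left (neg_le_abs (θ + a)) e1
  have n1 := mul_le_mul_of_nonneg_left (le_abs_self (θ - a)) e2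
  have n2 := mul_le_mul_of_nonneg_left (neg_le_abs (θ - a)) e2
  have n3 := mul_le_mul_of_nonneg_left (le_abs_self (θ + a)) e2
  have n4 := mul_le_mul_of_nonneg_left (neg_le_abs (θ + a)) e2
  -- Triangle inequality `2 a ≤ |θ - a| + |θ + a|`, scaled by the lighter of the two weights.
  have t := mul_le_mul_of_nonneg_left
    (show 2 * a ≤ |θ - a| + |θ + a| by linarith [neg_le_abs (θ - a), le_abs_self (θ + a)]) e2
  have q1 := mul_nonneg h0 (abs_nonneg (θ - a))
  have q2 := mul_nonneg h0 (abs_nonneg (θ + a))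
  by_cases hθ : 0 < θ
  · have := mul_nonneg h0 hθ.le
    cases b <;> simp [sg, hθ] <;> nlinarith
  · have := mul_nonneg h0 (show 0 ≤ -θ by linarith)
    cases b <;> simp [sg, hθ] <;> nlinarith

/-- Excess of the expected loss over its value at the vertex `(v_j a_j)`. -/
lemma excess_lower {d : ℕ} (β a p δ : Fin d → ℝ) (hβ : ∀ j, 0 < β j) (ha : ∀ j, 0 ≤ a j)
    (hp : ∀ j, 0 ≤ p j) (hδ0 : ∀ j, 0 ≤ δ j) (hδ1 : ∀ j, δ j ≤ 1) (v : Fin d → Bool)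
    (θ : Fin d → ℝ) :
    ∑ j, (if v j = decide (0 < θ j) then 0 else p j * (a j / β j) * δ j) ≤
      ∑ y, signLaw p δ v y * absLoss β a θ y -
        ∑ y, signLaw p δ v y * absLoss β a (fun j => sg (v j) * a j) y := by
  rw [Fintype.sum_prod_type, Fintype.sum_prod_type, ← Finset.sum_sub_distrib]
  refine Finset.sum_le_sum fun j _ => ?_
  have hpb : 0 ≤ p j * (1 / β j) := mul_nonneg (hp j) (one_div_pos.2 (hβ j)).le
  have h := mul_le_mul_of_nonneg_left
    (coord_excess (a j) (δ j) (θ j) (hδ0 j) (hδ1 j) (v j)) hpb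
  have e1 : ∑ s, signLaw p δ v (j, s) * absLoss β a θ (j, s) = p j * (1 / β j) *
      ((1 + sg (v j) * δ j) / 2 * |θ j - a j| + (1 - sg (v j) * δ j) / 2 * |θ j + a j|) := by
    simp [signLaw, absLoss, sg]
    ring
  have e2 : ∑ s, signLaw p δ v (j, s) * absLoss β a (fun j => sg (v j) * a j) (j, s) =
      p j * (1 / β j) * ((1 - δ j) * a j) := by
    have h2 : |a j + a j| = 2 * a j := by rw [abs_of_nonneg (by linarith [ha j])]; ring
    have h3 : |-a j - a j| = 2 * a j := by
      rw [abs_of_nonpos (by linarith [ha j])]; ring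
    cases hv : v j <;> simp [signLaw, absLoss, sg, hv, h2, h3] <;> ring
  rw [e1, e2]
  have e3 : (if v j = decide (0 < θ j) then 0 else p j * (a j / β j) * δ j) =
      p j * (1 / β j) * (if v j = decide (0 < θ j) then 0 else δ j * a j) := by
    split_ifs
    · simp
    · ring
  rw [e3]
  linarith

/-! ### Assouad's method -/

/-- If any two laws differing in the `j`-th sign have common mass at least `τ`, the weighted number
of wrongly guessed signs, summed over all sign vectors, is at least `2^d (τ/2) ∑ w_j`. -/
lemma assouad {d : ℕ} {T : Type*} [Fintype T] (L : (Fin d → Bool) → T → ℝ)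
    (w : Fin d → ℝ) (hw : ∀ j, 0 ≤ w j) (τ : ℝ)
    (hτ : ∀ v j, τ ≤ ∑ x, min (L v x) (L (flipAt j v) x)) (D : T → Fin d → Bool) :
    ∑ _v : Fin d → Bool, τ / 2 * ∑ j, w j ≤
      ∑ v : Fin d → Bool, ∑ x, L v x * ∑ j, (if v j = D x j then 0 else w j) := by
  have hj : ∀ j, ∑ _v : Fin d → Bool, τ * w j ≤
      2 * ∑ v : Fin d → Bool, ∑ x, L v x * (if v j = D x j then 0 else w j) := by
    intro j
    have hfl : ∑ v : Fin d → Bool, ∑ x, L v x * (if v j = D x j then 0 else w j) =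
        ∑ v : Fin d → Bool, ∑ x, L (flipAt j v) x * (if v j = D x j then w j else 0) := by
      rw [← Equiv.sum_comp ((flipAt_involutive j).toPerm (flipAt j))]
      refine Finset.sum_congr rfl fun v _ => Finset.sum_congr rfl fun x _ => ?_
      have : (flipAt_involutive j).toPerm (flipAt j) v = flipAt j v := rfl
      rw [this]
      congr 1
      simp only [flipAt, Function.update_self]
      cases v j <;> cases D x j <;> simp
    rw [two_mul]
    nth_rewrite 2 [hfl]
    rw [← Finset.sum_add_distrib]
    refine Finset.sum_le_sum fun v _ => ?_
    rw [← Finset.sum_add_distrib]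
    calc τ * w j ≤ (∑ x, min (L v x) (L (flipAt j v) x)) * w j :=
          mul_le_mul_of_nonneg_right (hτ v j) (hw j)
      _ ≤ _ := by
          rw [Finset.sum_mul]
          refine Finset.sum_le_sum fun x _ => ?_
          split_ifs
          · simpa using mul_le_mul_of_nonneg_right (min_le_right _ _) (hw j)
          · simpa using mul_le_mul_of_nonneg_right (min_le_left _ _) (hw j)
  have hs := Finset.sum_le_sum fun j (_ : j ∈ Finset.univ) => hj j
  rw [← Finset.mul_sum, Finset.sum_comm] at hs
  have e1 : ∑ v : Fin d → Bool, ∑ x, L v x * ∑ j, (if v j = D x j then 0 else w j) =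
      ∑ j, ∑ v : Fin d → Bool, ∑ x, L v x * (if v j = D x j then 0 else w j) := by
    rw [Finset.sum_comm (s := (Finset.univ : Finset (Fin d)))]
    refine Finset.sum_congr rfl fun v _ => ?_
    rw [Finset.sum_comm]
    exact Finset.sum_congr rfl fun x _ => Finset.mul_sum _ _ _
  rw [e1]
  have e2 : ∑ _v : Fin d → Bool, ∑ j, τ * w j = 2 * ∑ _v : Fin d → Bool, τ / 2 * ∑ j, w j := by
    rw [Finset.mul_sum]
    refine Finset.sum_congr rfl fun v _ => ?_
    rw [← Finset.mul_sum]
    ring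
  linarith

/-- The hard instance with masses `p` and biases `δ`. The constraint `n p_j δ_j² ≤ 4/25` gives
affinity at least `21/25` between the `n`-fold products of laws that differ in one sign. -/
lemma hard_instance (d n : ℕ) (hd : 1 ≤ d) (r : ℝ) (hr1 : 1 ≤ r)
    (β : Fin d → ℝ) (hβ : ∀ j, 0 < β j) (Θ : Set (Fin d → ℝ)) (a p δ : Fin d → ℝ)
    (ha : ∀ j, 0 ≤ a j) (haΘ : ∀ v : Fin d → Bool, (fun j => sg (v j) * a j) ∈ Θ)
    (hp : ∀ j, 0 ≤ p j) (hp1 : ∑ j, p j = 1) (hδ0 : ∀ j, 0 ≤ δ j) (hδ1 : ∀ j, δ j ≤ 1)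
    (hnp : ∀ j, n * (p j * δ j ^ 2) ≤ 4 / 25) (B : ℝ)
    (hB : B ≤ (21 / 25) ^ 2 / 4 * ∑ j, p j * (a j / β j) * δ j) :
    ∃ (m K : ℕ) (F : (Fin d → ℝ) → Fin m → ℝ) (P : Fin K → Fin m → ℝ),
      0 < m ∧ 0 < K ∧
      IsHardInstance d n m K Θ (fun g => (∑ j, (β j * |g j|) ^ r) ^ (1 / r)) F P B := by
  classical
  have : Nonempty (Fin d) := ⟨⟨0, hd⟩⟩
  let e := (Fintype.equivFin (Fin d × Bool)).symm
  let e' := (Fintype.equivFin (Fin d → Bool)).symm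
  have hQ0 := signLaw_nonneg p δ hp hδ0 hδ1
  have hsum : ∀ f : Fin d × Bool → ℝ, ∑ x, f (e x) = ∑ y, f y := fun f => Equiv.sum_comp e f
  refine ⟨_, _, fun θ x => absLoss β a θ (e x), fun v x => signLaw p δ (e' v) (e x),
    Fintype.card_pos, Fintype.card_pos, fun x => absLoss_convex β a hβ _, ?_,
    fun v x => hQ0 _ _, fun v => ?_, ?_⟩
  · intro x θ g hg
    exact subgradient_bound_s6 r hr1 β hβ _ (e x).1 (fun θ θ' => absLoss_lipschitz β a hβ _ θ θ')
      θ g hg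
  · rw [hsum (signLaw p δ (e' v)), signLaw_sum p δ hp1]
  intro est
  have hw : ∀ j, 0 ≤ p j * (a j / β j) * δ j := fun j =>
    mul_nonneg (mul_nonneg (hp j) (div_nonneg (ha j) (hβ j).le)) (hδ0 j)
  have hL : ∀ (v : Fin d → Bool) (xs : Fin n → Fin (Fintype.card (Fin d × Bool))),
      0 ≤ ∏ i, signLaw p δ v (e (xs i)) := fun v xs => Finset.prod_nonneg fun i _ => hQ0 _ _
  have has := assouad (fun v (xs : Fin n → Fin (Fintype.card (Fin d × Bool))) =>
      ∏ i, signLaw p δ v (e (xs i))) (fun j => p j * (a j / β j) * δ j) hw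
    ((21 / 25) ^ 2 / 2) (by
      intro v j
      refine sum_min_prod_lower n (fun x => signLaw p δ v (e x))
        (fun x => signLaw p δ (flipAt j v) (e x)) (fun x => hQ0 _ _) (fun x => hQ0 _ _)
        ((hsum _).trans (signLaw_sum p δ hp1 v)) ((hsum _).trans (signLaw_sum p δ hp1 _))
        (21 / 25) (by norm_num) ?_
      have haff := affinity_lower p δ hp hp1 hδ0 hδ1 v j
      rw [← hsum] at haff
      have hp1' : p j ≤ 1 := by
        rw [← hp1]; exact Finset.single_le_sum (fun i _ => hp i) (Finset.mem_univ j)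
      have h3 : δ j ^ 2 ≤ 1 := pow_le_one₀ (hδ0 j) (hδ1 j)
      have h4 : p j * δ j ^ 2 ≤ 1 := mul_le_one₀ hp1' (sq_nonneg _) h3
      have hpow := pow_le_pow_left₀ (by linarith) haff n
      have hbern := one_add_mul_le_pow (a := -(p j * δ j ^ 2)) (by linarith) n
      rw [← sub_eq_add_neg 1] at hbern
      have := hnp j
      linarith)
    (fun xs j => decide (0 < est xs j))
  -- The risk under each law dominates the weighted count of wrong signs.
  have hrisk : ∀ v, ∑ xs, (∏ i, signLaw p δ v (e (xs i))) *
      ∑ j, (if v j = decide (0 < est xs j) then 0 else p j * (a j / β j) * δ j) ≤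
      risk d n _ (fun x => signLaw p δ v (e x)) (fun θ x => absLoss β a θ (e x)) Θ est := by
    intro v
    refine Finset.sum_le_sum fun xs _ => mul_le_mul_of_nonneg_left ?_ (hL v xs)
    have h1 := excess_lower β a p δ hβ ha hp hδ0 hδ1 v (est xs)
    have hE : ∀ θ, expLoss (fun x => signLaw p δ v (e x)) (fun θ x => absLoss β a θ (e x)) θ =
        ∑ y, signLaw p δ v y * absLoss β a θ y := fun θ =>
      hsum fun y => signLaw p δ v y * absLoss β a θ y
    have h2 : sInf (expLoss (fun x => signLaw p δ v (e x))
        (fun θ x => absLoss β a θ (e x)) '' Θ) ≤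
        ∑ y, signLaw p δ v y * absLoss β a (fun j => sg (v j) * a j) y := by
      refine csInf_le ⟨0, ?_⟩ ⟨_, haΘ v, hE _⟩
      rintro _ ⟨θ, _, rfl⟩
      rw [hE]
      exact Finset.sum_nonneg fun y _ => mul_nonneg (hQ0 _ _)
        (mul_nonneg (one_div_pos.2 (hβ _)).le (abs_nonneg _))
    rw [hE]
    linarith
  obtain ⟨v, _, hv⟩ := Finset.exists_le_of_sum_le Finset.univ_nonempty
    (has.trans (Finset.sum_le_sum fun v _ => hrisk v))
  refine ⟨e'.symm v, ?_⟩
  simp only [Equiv.apply_symm_apply]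
  refine le_trans (hB.trans (le_of_eq ?_)) hv
  ring

/-- When `p_j = A_j² / S²` is not too small for the sample size, the bias
`(2/5) S / (√n A_j)` is admissible; otherwise the bias is zero. -/
lemma bias_choice (n : ℕ) (hn : 0 < n) (A S : ℝ) (hA : 0 ≤ A) (hS : 0 < S) :
    ∃ δ : ℝ, 0 ≤ δ ∧ δ ≤ 1 ∧ n * (A ^ 2 / S ^ 2 * δ ^ 2) ≤ 4 / 25 ∧
      (A ^ 2 / S ^ 2 - 4 / (25 * n)) * (2 / 5 * (S / Real.sqrt n)) ≤ A ^ 2 / S ^ 2 * A * δ := by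
  have hn' : (0 : ℝ) < n := by exact_mod_cast hn
  have hq : 0 < Real.sqrt n := Real.sqrt_pos.2 hn'
  have hqq : Real.sqrt n ^ 2 = n := Real.sq_sqrt hn'.le
  by_cases h : 4 / 25 ≤ n * (A ^ 2 / S ^ 2)
  · have hA' : 0 < A := by
      rcases hA.lt_or_eq with h' | h'
      · exact h'
      · rw [← h'] at h; norm_num at h
    have hE : n * (A ^ 2 / S ^ 2 * (2 / 5 * S / (Real.sqrt n * A)) ^ 2) = 4 / 25 := by
      field_simp; rw [hqq]; ring
    refine ⟨2 / 5 * S / (Real.sqrt n * A), by positivity, ?_, hE.le, ?_⟩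
    · have hδ : (2 / 5 * S / (Real.sqrt n * A)) ^ 2 ≤ 1 := by
        by_contra hc
        push Not at hc
        nlinarith
      exact (sq_le_one_iff₀ (by positivity)).1 hδ
    · have : A ^ 2 / S ^ 2 * A * (2 / 5 * S / (Real.sqrt n * A)) =
          A ^ 2 / S ^ 2 * (2 / 5 * (S / Real.sqrt n)) := by field_simp
      rw [this]
      refine mul_le_mul_of_nonneg_right ?_ (by positivity)
      have : (0 : ℝ) < 4 / (25 * n) := by positivity
      linarith
  · push Not at h
    refine ⟨0, le_rfl, zero_le_one, by norm_num, ?_⟩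
    rw [mul_zero]
    refine mul_nonpos_of_nonpos_of_nonneg ?_ (by positivity)
    have : A ^ 2 / S ^ 2 < 4 / 25 / n := by rw [lt_div_iff₀ hn']; linarith
    rw [div_div] at this
    linarith

theorem statement6 (d n : ℕ) (hd : 1 ≤ d) (hn : 2 * d ≤ n)
    (r : ℝ) (hr1 : 1 ≤ r) (hr2 : r ≤ 2)
    (β : Fin d → ℝ) (hβ : ∀ j, 0 < β j)
    (Θ : Set (Fin d → ℝ)) (hΘne : Θ.Nonempty) (hΘc : IsCompact Θ)
    (hΘconv : Convex ℝ Θ) (hΘqc : QuadConvex Θ) (hΘos : OrthoSymm Θ) :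
    ∃ (m K : ℕ) (F : (Fin d → ℝ) → Fin m → ℝ) (P : Fin K → Fin m → ℝ),
      0 < m ∧ 0 < K ∧
      IsHardInstance d n m K Θ
        (fun g => (∑ j, (β j * |g j|) ^ r) ^ (1 / r)) F P
        ((1 / 16) * (1 / Real.sqrt n) *
          sSup {t : ℝ | ∃ θ ∈ Θ, t = Real.sqrt (∑ j, (θ j) ^ 2 / (β j) ^ 2)}) := by
  have hn0 : 0 < n := by omega
  have hn' : (0 : ℝ) < n := by exact_mod_cast hn0
  have hq : 0 < Real.sqrt n := Real.sqrt_pos.2 hn'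
  obtain ⟨θ₀, hθ₀, hmax⟩ := hΘc.exists_isMaxOn hΘne
    (f := fun θ : Fin d → ℝ => Real.sqrt (∑ j, (θ j) ^ 2 / (β j) ^ 2))
    (by fun_prop)
  set S := Real.sqrt (∑ j, (θ₀ j) ^ 2 / (β j) ^ 2) with hSdef
  have hsup : sSup {t : ℝ | ∃ θ ∈ Θ, t = Real.sqrt (∑ j, (θ j) ^ 2 / (β j) ^ 2)} = S := by
    refine IsGreatest.csSup_eq ⟨⟨θ₀, hθ₀, rfl⟩, ?_⟩
    rintro _ ⟨θ, hθ, rfl⟩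
    exact hmax hθ
  rw [hsup]
  have hS0 : 0 ≤ S := Real.sqrt_nonneg _
  rcases hS0.eq_or_lt with hS | hS
  · -- The bound is zero; the zero loss on a one-point sample space attains it.
    refine ⟨1, 1, fun _ _ => 0, fun _ _ => 1, one_pos, one_pos, fun _ => convexOn_const _ convex_univ,
      ?_, fun _ _ => zero_le_one, fun _ => by simp, fun est => ⟨0, ?_⟩⟩
    · intro x θ g hg
      refine subgradient_bound_s6 r hr1 β hβ _ ⟨0, hd⟩ (fun θ θ' => ?_) θ g hg
      have := hβ ⟨0, hd⟩
      rw [sub_self]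
      positivity
    · have : expLoss (fun _ : Fin 1 => (1 : ℝ)) (fun (_ : Fin d → ℝ) (_ : Fin 1) => (0 : ℝ)) =
          fun _ => 0 := by
        funext θ; simp [expLoss]
      simp [risk, this, hΘne.image_const, ← hS]
  have hSS : S ^ 2 = ∑ j, (|θ₀ j| / β j) ^ 2 := by
    rw [hSdef, Real.sq_sqrt (Finset.sum_nonneg fun j _ => by positivity)]
    exact Finset.sum_congr rfl fun j _ => by rw [div_pow, sq_abs]
  have hA : ∀ j, 0 ≤ |θ₀ j| / β j := fun j => div_nonneg (abs_nonneg _) (hβ j).le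
  choose δ hδ0 hδ1 hδn hδw using fun j => bias_choice n hn0 (|θ₀ j| / β j) S (hA j) hS
  have hp1 : ∑ j, (|θ₀ j| / β j) ^ 2 / S ^ 2 = 1 := by
    rw [← Finset.sum_div, ← hSS, div_self (by positivity)]
  refine hard_instance d n hd r hr1 β hβ Θ (fun j => |θ₀ j|)
    (fun j => (|θ₀ j| / β j) ^ 2 / S ^ 2) δ (fun j => abs_nonneg _) ?_ (fun j => by positivity)
    hp1 hδ0 hδ1 hδn _ ?_
  · intro v
    -- The vertex `sg (v j) |θ₀ j|` is a sign flip of `θ₀`.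
    have h := hΘos θ₀ hθ₀ (fun j => if 0 ≤ θ₀ j then sg (v j) else -sg (v j)) (fun j => by
      cases v j <;> by_cases h0 : 0 ≤ θ₀ j <;> simp [sg, h0])
    convert h using 2 with j
    by_cases h0 : 0 ≤ θ₀ j
    · rw [if_pos h0, abs_of_nonneg h0]
    · rw [if_neg h0, abs_of_neg (not_le.1 h0)]; ring
  · have hs := Finset.sum_le_sum fun j (_ : j ∈ Finset.univ) => hδw j
    rw [← Finset.sum_mul, Finset.sum_sub_distrib, hp1] at hs
    simp only [Finset.sum_const, Finset.card_univ, Fintype.card_fin, nsmul_eq_mul] at hs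
    have hdn : (d : ℝ) * (4 / (25 * n)) ≤ 2 / 25 := by
      have h2 : (2 : ℝ) * d ≤ n := by exact_mod_cast hn
      rw [← mul_div_assoc, div_le_div_iff₀ (by positivity) (by norm_num)]
      linarith
    have hT : 0 < S / Real.sqrt n := by positivity
    have e : 1 / 16 * (1 / Real.sqrt n) * S = 1 / 16 * (S / Real.sqrt n) := by ring
    rw [e]
    have h3 : (1 - 2 / 25) * (2 / 5 * (S / Real.sqrt n)) ≤
        (1 - (d : ℝ) * (4 / (25 * n))) * (2 / 5 * (S / Real.sqrt n)) :=
      mul_le_mul_of_nonneg_right (by linarith) (by positivity)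
    linarith
end
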